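/- arXiv:1107.1172 — 6 statements merged into one kernel-verified Lean document; each statement's English description precedes it below -/
import Mathlib

section
/- Let k : [0,∞) → (0,∞) be continuous, nondecreasing, with k(r) → +∞ as r → +∞, and let g ∈ C²([0,∞)) be the solution of the initial value problem g''(r) = k(r)² g(r), g(0) = 0, g'(0) = 1. Then g(r) > 0 for all r > 0, and there exists r₀ > 0 such that g'(r) ≤ k(r) g(r) for all r ≥ r₀. -/
open Set Filter

/-!
Both halves are monotonicity arguments, and neither divides by `g`.

Since `g g'' ≥ 0`, the derivative `g'² + g g''` of `g g'` is nonnegative, so `g g' ≥ 0` and hence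
`g²` is nondecreasing. As `g` is positive just to the right of `0`, it can never return to `0`.

For the comparison, fix `κ = k(R)`. Monotonicity of `k` gives `g'' ≤ κ² g` up to `R`, and then the
linear form `(g' - κ g)' ≤ -κ (g' - κ g)` of the Riccati inequality says that the sign condition
`g' ≤ κ g` persists from an earlier point `b` up to `R`. It holds at a fixed `b` once `R` is large,
because `k(R) g(b) → ∞`.
-/

section Monotonicity

variable {u u' u'' : ℝ → ℝ} {s : Set ℝ}

theorem monotoneOn_mul_deriv (hs : Convex ℝ s) (hu : ∀ x ∈ s, HasDerivWithinAt u (u' x) s x)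
    (hu' : ∀ x ∈ s, HasDerivWithinAt u' (u'' x) s x) (h : ∀ x ∈ s, 0 ≤ u x * u'' x) :
    MonotoneOn (fun x ↦ u x * u' x) s := by
  have hderiv : ∀ x ∈ s,
      HasDerivWithinAt (fun x ↦ u x * u' x) (u' x * u' x + u x * u'' x) s x :=
    fun x hx ↦ (hu x hx).mul (hu' x hx)
  exact monotoneOn_of_hasDerivWithinAt_nonneg hs (fun x hx ↦ (hderiv x hx).continuousWithinAt)
    (fun x hx ↦ (hderiv x (interior_subset hx)).mono interior_subset)
    (fun x hx ↦ add_nonneg (mul_self_nonneg _) (h x (interior_subset hx)))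

theorem monotoneOn_sq_of_mul_deriv_nonneg (hs : Convex ℝ s)
    (hu : ∀ x ∈ s, HasDerivWithinAt u (u' x) s x) (h : ∀ x ∈ s, 0 ≤ u x * u' x) :
    MonotoneOn (fun x ↦ u x ^ 2) s := by
  have hderiv : ∀ x ∈ s, HasDerivWithinAt (fun x ↦ u x ^ 2) (2 * (u x * u' x)) s x :=
    fun x hx ↦ ((hu x hx).fun_pow 2).congr_deriv (by ring)
  exact monotoneOn_of_hasDerivWithinAt_nonneg hs (fun x hx ↦ (hderiv x hx).continuousWithinAt)
    (fun x hx ↦ (hderiv x (interior_subset hx)).mono interior_subset)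
    (fun x hx ↦ mul_nonneg zero_le_two (h x (interior_subset hx)))

end Monotonicity

section Positivity

variable {u u' u'' : ℝ → ℝ} {a : ℝ}

theorem eventually_lt_of_hasDerivWithinAt_Ici_pos {d : ℝ} (hu : HasDerivWithinAt u d (Ici a) a)
    (hd : 0 < d) : ∀ᶠ x in nhdsWithin a (Ioi a), u a < u x := by
  have hslope := (hasDerivWithinAt_iff_tendsto_slope' self_notMem_Ioi).1 hu.Ioi_of_Ici
  filter_upwards [hslope.eventually_const_lt hd, self_mem_nhdsWithin] with x hx hax
  exact (slope_pos_iff_of_le (le_of_lt hax)).1 hx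

theorem pos_of_monotoneOn_sq (hu : ContinuousOn u (Ici a))
    (hsq : MonotoneOn (fun x ↦ u x ^ 2) (Ici a)) (ha : 0 < u a) {x : ℝ} (hx : a ≤ x) :
    0 < u x := by
  by_contra! hux
  obtain ⟨z, hz, huz⟩ := intermediate_value_Icc' hx (hu.mono Icc_subset_Ici_self) ⟨hux, ha.le⟩
  have hle : u a ^ 2 ≤ 0 := by simpa [huz] using hsq self_mem_Ici hz.1 hz.1
  exact hle.not_gt (pow_pos ha 2)

theorem pos_of_mul_deriv2_nonneg (hu : ∀ x ∈ Ici a, HasDerivWithinAt u (u' x) (Ici a) x)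
    (hu' : ∀ x ∈ Ici a, HasDerivWithinAt u' (u'' x) (Ici a) x)
    (h : ∀ x ∈ Ici a, 0 ≤ u x * u'' x) (ha : 0 ≤ u a) (ha' : 0 < u' a) {x : ℝ} (hx : a < x) :
    0 < u x := by
  have hmul : ∀ y ∈ Ici a, 0 ≤ u y * u' y := fun y hy ↦
    (mul_nonneg ha ha'.le).trans
      (monotoneOn_mul_deriv (convex_Ici a) hu hu' h self_mem_Ici hy hy)
  have hsq := monotoneOn_sq_of_mul_deriv_nonneg (convex_Ici a) hu hmul
  obtain ⟨y, huy, hay, hyx⟩ :=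
    ((eventually_lt_of_hasDerivWithinAt_Ici_pos (hu a self_mem_Ici) ha').and
      (Ioo_mem_nhdsGT hx)).exists
  have hsub : Ici y ⊆ Ici a := Ici_subset_Ici.2 hay.le
  exact pos_of_monotoneOn_sq (fun z hz ↦ (hu z (hsub hz)).continuousWithinAt.mono hsub)
    (hsq.mono hsub) (ha.trans_lt huy) hyx.le

end Positivity

section Comparison

variable {u u' u'' : ℝ → ℝ}

theorem antitoneOn_exp_mul_deriv_sub {s : Set ℝ} {κ : ℝ} (hs : Convex ℝ s)
    (hu : ∀ x ∈ s, HasDerivWithinAt u (u' x) s x)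
    (hu' : ∀ x ∈ s, HasDerivWithinAt u' (u'' x) s x) (h : ∀ x ∈ s, u'' x ≤ κ ^ 2 * u x) :
    AntitoneOn (fun x ↦ Real.exp (κ * x) * (u' x - κ * u x)) s := by
  have hderiv : ∀ x ∈ s, HasDerivWithinAt (fun x ↦ Real.exp (κ * x) * (u' x - κ * u x))
      (Real.exp (κ * x) * (u'' x - κ ^ 2 * u x)) s x := fun x hx ↦
    ((((hasDerivWithinAt_id x s).const_mul κ).exp).mul
      ((hu' x hx).fun_sub ((hu x hx).const_mul κ))).congr_deriv (by simp only [id]; ring)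
  exact antitoneOn_of_hasDerivWithinAt_nonpos hs (fun x hx ↦ (hderiv x hx).continuousWithinAt)
    (fun x hx ↦ (hderiv x (interior_subset hx)).mono interior_subset)
    (fun x hx ↦ mul_nonpos_of_nonneg_of_nonpos (Real.exp_pos _).le
      (sub_nonpos.2 (h x (interior_subset hx))))

theorem deriv_le_mul_of_deriv_le_mul {s : Set ℝ} {κ x y : ℝ} (hs : Convex ℝ s)
    (hu : ∀ x ∈ s, HasDerivWithinAt u (u' x) s x)
    (hu' : ∀ x ∈ s, HasDerivWithinAt u' (u'' x) s x) (h : ∀ x ∈ s, u'' x ≤ κ ^ 2 * u x)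
    (hx : x ∈ s) (hy : y ∈ s) (hxy : x ≤ y) (hle : u' x ≤ κ * u x) : u' y ≤ κ * u y := by
  have hexp : Real.exp (κ * y) * (u' y - κ * u y) ≤ 0 :=
    calc Real.exp (κ * y) * (u' y - κ * u y)
        ≤ Real.exp (κ * x) * (u' x - κ * u x) :=
          antitoneOn_exp_mul_deriv_sub hs hu hu' h hx hy hxy
      _ ≤ 0 := mul_nonpos_of_nonneg_of_nonpos (Real.exp_pos _).le (sub_nonpos.2 hle)
  exact sub_nonpos.1 (nonpos_of_mul_nonpos_right hexp (Real.exp_pos _))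

theorem eventually_deriv_le_mul {k : ℝ → ℝ} {a : ℝ} (hk_mono : MonotoneOn k (Ici a))
    (hk_infty : Tendsto k atTop atTop)
    (hu : ∀ x ∈ Ici a, HasDerivWithinAt u (u' x) (Ici a) x)
    (hu' : ∀ x ∈ Ici a, HasDerivWithinAt u' (u'' x) (Ici a) x)
    (h : ∀ x ∈ Ici a, u'' x ≤ k x ^ 2 * u x) (hpos : ∀ x ∈ Ici a, 0 < u x) :
    ∀ᶠ r in atTop, u' r ≤ k r * u r := by
  obtain ⟨b, hkb, hab⟩ :=
    ((hk_infty.eventually_ge_atTop 0).and (eventually_ge_atTop a)).exists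
  filter_upwards [(hk_infty.atTop_mul_const (hpos b hab)).eventually_ge_atTop (u' b),
    eventually_ge_atTop b] with r hr hbr
  have hsub : Icc b r ⊆ Ici a := fun x hx ↦ hab.trans hx.1
  have hle : ∀ x ∈ Icc b r, u'' x ≤ k r ^ 2 * u x := fun x hx ↦ by
    have hkx : 0 ≤ k x := hkb.trans (hk_mono hab (hsub hx) hx.1)
    have hkxr : k x ≤ k r := hk_mono (hsub hx) (hab.trans hbr) hx.2
    calc u'' x ≤ k x ^ 2 * u x := h x (hsub hx)
      _ ≤ k r ^ 2 * u x :=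
        mul_le_mul_of_nonneg_right (pow_le_pow_left₀ hkx hkxr 2) (hpos x (hsub hx)).le
  exact deriv_le_mul_of_deriv_le_mul (convex_Icc b r) (fun x hx ↦ (hu x (hsub hx)).mono hsub)
    (fun x hx ↦ (hu' x (hsub hx)).mono hsub) hle (left_mem_Icc.2 hbr) (right_mem_Icc.2 hbr) hbr hr

end Comparison

theorem stmt1_general {k g g' g'' : ℝ → ℝ} {a : ℝ} (hk_mono : MonotoneOn k (Ici a))
    (hk_infty : Tendsto k atTop atTop)
    (hg : ∀ r ∈ Ici 0, HasDerivWithinAt g (g' r) (Ici 0) r)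
    (hg' : ∀ r ∈ Ici 0, HasDerivWithinAt g' (g'' r) (Ici 0) r)
    (hnonneg : ∀ r ∈ Ici 0, 0 ≤ g r * g'' r) (hle : ∀ r ∈ Ici a, g'' r ≤ k r ^ 2 * g r)
    (hg0 : 0 ≤ g 0) (hg'0 : 0 < g' 0) :
    (∀ r : ℝ, 0 < r → 0 < g r) ∧ ∃ r₀ : ℝ, 0 < r₀ ∧ ∀ r : ℝ, r₀ ≤ r → g' r ≤ k r * g r := by
  have hpos : ∀ r : ℝ, 0 < r → 0 < g r := fun r hr ↦
    pos_of_mul_deriv2_nonneg hg hg' hnonneg hg0 hg'0 hr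
  have hsub_a : Ici (max a 1) ⊆ Ici a := Ici_subset_Ici.2 (le_max_left a 1)
  have hsub_pos : Ici (max a 1) ⊆ Ioi 0 := Ici_subset_Ioi.2 (lt_max_of_lt_right one_pos)
  have hsub : Ici (max a 1) ⊆ Ici 0 := hsub_pos.trans Ioi_subset_Ici_self
  have hev : ∀ᶠ r in atTop, g' r ≤ k r * g r :=
    eventually_deriv_le_mul (hk_mono.mono hsub_a) hk_infty
      (fun r hr ↦ (hg r (hsub hr)).mono hsub) (fun r hr ↦ (hg' r (hsub hr)).mono hsub)
      (fun r hr ↦ hle r (hsub_a hr)) (fun r hr ↦ hpos r (hsub_pos hr))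
  obtain ⟨r₀, hr₀, hcomp⟩ := (atTop_basis' (1 : ℝ)).eventually_iff.1 hev
  exact ⟨hpos, r₀, one_pos.trans_le hr₀, fun r hr ↦ hcomp hr⟩

/-- Let `k : [0,∞) → (0,∞)` be continuous, nondecreasing, with
`k(r) → +∞` as `r → +∞`, and let `g ∈ C²([0,∞))` solve `g'' = k² g`, `g(0)=0`,
`g'(0)=1`.  Then `g > 0` on `(0,∞)` and there exists `r₀ > 0` such that
`g'(r) ≤ k(r) g(r)` for all `r ≥ r₀`. -/
theorem stmt1
    (k : ℝ → ℝ)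
    (hk_cont : ContinuousOn k (Set.Ici 0))
    (hk_pos : ∀ r : ℝ, 0 ≤ r → 0 < k r)
    (hk_mono : MonotoneOn k (Set.Ici 0))
    (hk_infty : Filter.Tendsto k Filter.atTop Filter.atTop)
    (g g' g'' : ℝ → ℝ)
    (hg_deriv : ∀ r : ℝ, 0 ≤ r → HasDerivWithinAt g (g' r) (Set.Ici 0) r)
    (hg'_deriv : ∀ r : ℝ, 0 ≤ r → HasDerivWithinAt g' (g'' r) (Set.Ici 0) r)
    (hg''_cont : ContinuousOn g'' (Set.Ici 0))
    (hODE : ∀ r : ℝ, 0 ≤ r → g'' r = (k r) ^ 2 * g r)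
    (hg0 : g 0 = 0) (hg'0 : g' 0 = 1) :
    (∀ r : ℝ, 0 < r → 0 < g r) ∧
    ∃ r₀ : ℝ, 0 < r₀ ∧ ∀ r : ℝ, r₀ ≤ r → g' r ≤ k r * g r := by
  have hnonneg : ∀ r ∈ Ici 0, 0 ≤ g r * g'' r := fun r hr ↦ by
    rw [hODE r hr, mul_left_comm]
    exact mul_nonneg (sq_nonneg _) (mul_self_nonneg _)
  exact stmt1_general hk_mono hk_infty hg_deriv hg'_deriv hnonneg (fun r hr ↦ (hODE r hr).le)
    hg0.ge (hg'0 ▸ one_pos)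
end

section
/- Let m ≥ 1 be a real number, let k : [0,∞) → (0,∞) be continuous, nondecreasing, with k(r) → +∞ as r → +∞ and ∫₁^∞ dr / k(r) = +∞, and let g ∈ C²([0,∞)) solve g''(r) = k(r)² g(r), g(0) = 0, g'(0) = 1. Then ∫₁^∞ ( ∫₀^r g(t)^m dt / g(r)^m ) dr = +∞, i.e. the function r ↦ ∫₀^r g(t)^m dt / g(r)^m is not integrable at +∞. -/
open Set Filter MeasureTheory intervalIntegral

/-!
Since `(g g')' = g'² + k² g² ≥ 0`, the product `g g'` is nonnegative, hence `g'²` is nondecreasing;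
as `g'(0) = 1`, the derivative never vanishes, so `g' ≥ 1` and `g(r) ≥ r`. Because `k` is
nondecreasing, `k(r)² g² - g'²` is nondecreasing on `[0, r]`, which gives `g' ≤ 1 + k g` and
therefore `g' ≤ C k g` away from `0`. Thus `(g ^ m)' ≤ |m| C k g ^ m`, and integrating from `a` to
`r` with `k` frozen at its largest value `k(r)` yields `g(r) ^ m ≤ A k(r) ∫₀^r g ^ m`, that is,
`1 / k ≤ A · (∫₀^r g ^ m) / g(r) ^ m` on `[a, ∞)`.
-/

theorem monotoneOn_of_hasDerivWithinAt_self_nonneg {D : Set ℝ} {f f' : ℝ → ℝ} (hD : Convex ℝ D)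
    (hf : ∀ x ∈ D, HasDerivWithinAt f (f' x) D x) (hf' : ∀ x ∈ interior D, 0 ≤ f' x) :
    MonotoneOn f D :=
  monotoneOn_of_hasDerivWithinAt_nonneg hD (fun x hx => (hf x hx).continuousWithinAt)
    (fun x hx => (hf x (interior_subset hx)).mono interior_subset) hf'

theorem le_add_const_mul_integral_of_deriv_le {a b K : ℝ} {u u' : ℝ → ℝ} (hab : a ≤ b)
    (hcont : ContinuousOn u (Icc a b)) (hu : ∀ t ∈ Ioo a b, HasDerivWithinAt u (u' t) (Ioi t) t)
    (hu' : ∀ t ∈ Ioo a b, u' t ≤ K * u t) : u b ≤ u a + K * ∫ t in a..b, u t := by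
  have h := sub_le_integral_of_hasDeriv_right_of_le hab hcont hu
    (hcont.integrableOn_Icc.const_mul K) hu'
  rw [intervalIntegral.integral_const_mul] at h
  linarith

theorem mul_mul_rpow_sub_one_le {x y c : ℝ} (m : ℝ) (hx : 0 < x) (hy : 0 ≤ y) (hyx : y ≤ c * x) :
    y * m * x ^ (m - 1) ≤ |m| * c * x ^ m := by
  have hpow : x * x ^ (m - 1) = x ^ m := by
    rw [mul_comm, ← Real.rpow_add_one hx.ne', sub_add_cancel]
  calc y * m * x ^ (m - 1) ≤ y * |m| * x ^ (m - 1) := by gcongr; exact le_abs_self m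
    _ ≤ c * x * |m| * x ^ (m - 1) := by gcongr
    _ = |m| * c * (x * x ^ (m - 1)) := by ring
    _ = |m| * c * x ^ m := by rw [hpow]

/-- `g`, with derivative `g'`, solves the Jacobi equation `g'' = k² g` on `[0, ∞)` with
`g(0) = 0` and `g'(0) = 1`: it is the warping function of the rotationally symmetric model of
radial curvature `-k²`. The derivatives are one-sided at `0`. -/
structure IsJacobiSolution (k g g' : ℝ → ℝ) : Prop where
  hasDerivWithinAt : ∀ r, 0 ≤ r → HasDerivWithinAt g (g' r) (Ici 0) r
  hasDerivWithinAt_deriv : ∀ r, 0 ≤ r → HasDerivWithinAt g' (k r ^ 2 * g r) (Ici 0) r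
  zero : g 0 = 0
  deriv_zero : g' 0 = 1

namespace IsJacobiSolution

variable {k g g' : ℝ → ℝ} {a m r : ℝ}

theorem continuousOn (h : IsJacobiSolution k g g') : ContinuousOn g (Ici 0) :=
  fun r hr => (h.hasDerivWithinAt r hr).continuousWithinAt

theorem mul_deriv_nonneg (h : IsJacobiSolution k g g') (hr : 0 ≤ r) : 0 ≤ g r * g' r := by
  have hmono : MonotoneOn (fun x => g x * g' x) (Ici 0) := by
    refine monotoneOn_of_hasDerivWithinAt_self_nonneg (convex_Ici 0)
      (fun x hx => (h.hasDerivWithinAt x hx).mul (h.hasDerivWithinAt_deriv x hx)) fun x _ => ?_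
    calc 0 ≤ g' x ^ 2 + (k x * g x) ^ 2 := by positivity
      _ = g' x * g' x + g x * (k x ^ 2 * g x) := by ring
  simpa only [h.zero, zero_mul] using hmono self_mem_Ici hr hr

theorem one_le_deriv_sq (h : IsJacobiSolution k g g') (hr : 0 ≤ r) : 1 ≤ g' r ^ 2 := by
  have hmono : MonotoneOn (fun x => g' x ^ 2) (Ici 0) := by
    refine monotoneOn_of_hasDerivWithinAt_self_nonneg (convex_Ici 0)
      (fun x hx => (h.hasDerivWithinAt_deriv x hx).pow 2) fun x hx => ?_
    have hx0 := h.mul_deriv_nonneg (interior_subset hx)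
    calc 0 ≤ 2 * k x ^ 2 * (g x * g' x) := by positivity
      _ = _ := by push_cast; ring
  simpa only [h.deriv_zero, one_pow] using hmono self_mem_Ici hr hr

theorem one_le_deriv (h : IsJacobiSolution k g g') (hr : 0 ≤ r) : 1 ≤ g' r := by
  suffices hpos : 0 ≤ g' r from (one_le_sq_iff₀ hpos).1 (h.one_le_deriv_sq hr)
  by_contra! hneg
  have hcont : ContinuousOn g' (Icc 0 r) := fun x hx =>
    (h.hasDerivWithinAt_deriv x hx.1).continuousWithinAt.mono Icc_subset_Ici_self
  have hmem : 0 ∈ Icc (g' r) (g' 0) := ⟨hneg.le, h.deriv_zero ▸ zero_le_one⟩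
  obtain ⟨c, hc, hc0⟩ := intermediate_value_Icc' hr hcont hmem
  have := h.one_le_deriv_sq hc.1
  norm_num [hc0] at this

theorem self_le (h : IsJacobiSolution k g g') (hr : 0 ≤ r) : r ≤ g r := by
  have hmono : MonotoneOn (fun x => g x - x) (Ici 0) :=
    monotoneOn_of_hasDerivWithinAt_self_nonneg (convex_Ici 0)
      (fun x hx => (h.hasDerivWithinAt x hx).sub (hasDerivWithinAt_id x _))
      fun x hx => sub_nonneg.2 (h.one_le_deriv (interior_subset hx))
  simpa only [h.zero, sub_self, sub_nonneg] using hmono self_mem_Ici hr hr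

theorem pos (h : IsJacobiSolution k g g') (hr : 0 < r) : 0 < g r :=
  hr.trans_le (h.self_le hr.le)

theorem deriv_sq_le (h : IsJacobiSolution k g g') (hk0 : 0 ≤ k 0) (hk : MonotoneOn k (Ici 0))
    (hr : 0 ≤ r) : g' r ^ 2 ≤ 1 + k r ^ 2 * g r ^ 2 := by
  have hmono : MonotoneOn (fun x => k r ^ 2 * g x ^ 2 - g' x ^ 2) (Icc 0 r) := by
    refine monotoneOn_of_hasDerivWithinAt_self_nonneg (convex_Icc 0 r) (fun x hx =>
      ((((h.hasDerivWithinAt x hx.1).pow 2).const_mul (k r ^ 2)).sub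
        ((h.hasDerivWithinAt_deriv x hx.1).pow 2)).mono Icc_subset_Ici_self) fun x hx => ?_
    obtain ⟨hx0, hxr⟩ := interior_subset hx
    have hkx : 0 ≤ k x := hk0.trans (hk self_mem_Ici hx0 hx0)
    have hsq : 0 ≤ k r ^ 2 - k x ^ 2 := sub_nonneg.2 (pow_le_pow_left₀ hkx (hk hx0 hr hxr) 2)
    calc 0 ≤ 2 * (k r ^ 2 - k x ^ 2) * (g x * g' x) :=
          mul_nonneg (by positivity) (h.mul_deriv_nonneg hx0)
      _ = _ := by push_cast; ring
  have hle := hmono (left_mem_Icc.2 hr) (right_mem_Icc.2 hr) hr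
  simp only [h.zero, h.deriv_zero] at hle
  linarith

theorem deriv_le_one_add (h : IsJacobiSolution k g g') (hk0 : 0 ≤ k 0)
    (hk : MonotoneOn k (Ici 0)) (hr : 0 ≤ r) : g' r ≤ 1 + k r * g r := by
  have hkr : 0 ≤ k r := hk0.trans (hk self_mem_Ici hr hr)
  have hkg : 0 ≤ k r * g r := mul_nonneg hkr (hr.trans (h.self_le hr))
  refine le_of_sq_le_sq ?_ (by positivity)
  linarith [h.deriv_sq_le hk0 hk hr, add_sq 1 (k r * g r), mul_pow (k r) (g r) 2]

theorem deriv_le_mul (h : IsJacobiSolution k g g') (hk0 : 0 ≤ k 0) (hk : MonotoneOn k (Ici 0))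
    (ha : 0 < a) (hka : 0 < k a) (har : a ≤ r) : g' r ≤ (1 + 1 / (k a * a)) * k r * g r := by
  have hr : 0 ≤ r := ha.le.trans har
  have hkar : k a ≤ k r := hk ha.le hr har
  have hle : k a * a ≤ k r * g r :=
    mul_le_mul hkar (har.trans (h.self_le hr)) ha.le (hka.le.trans hkar)
  calc g' r ≤ 1 + k r * g r := h.deriv_le_one_add hk0 hk hr
    _ ≤ k r * g r / (k a * a) + k r * g r := by gcongr; exact (one_le_div (by positivity)).2 hle
    _ = (1 + 1 / (k a * a)) * k r * g r := by ring

theorem hasDerivAt_rpow (h : IsJacobiSolution k g g') (hr : 0 < r) :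
    HasDerivAt (fun t => g t ^ m) (g' r * m * g r ^ (m - 1)) r :=
  ((h.hasDerivWithinAt r hr.le).hasDerivAt (Ici_mem_nhds hr)).rpow_const (Or.inl (h.pos hr).ne')

theorem intervalIntegrable_rpow (h : IsJacobiSolution k g g') (hm : -1 < m) (hr : 0 ≤ r) :
    IntervalIntegrable (fun t => g t ^ m) volume 0 r := by
  rcases le_total 0 m with hm0 | hm0
  · refine ((h.continuousOn.mono ?_).rpow_const fun _ _ => Or.inr hm0).intervalIntegrable
    rw [uIcc_of_le hr]
    exact Icc_subset_Ici_self
  · -- For negative `m` the singularity at `0` is no worse than that of `t ^ m`, as `t ≤ g t`.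
    refine (intervalIntegrable_rpow' hm).mono_fun' ?_ ?_ <;> rw [uIoc_of_le hr]
    · exact ContinuousOn.aestronglyMeasurable
        (fun t ht => (h.hasDerivAt_rpow ht.1).continuousAt.continuousWithinAt) measurableSet_Ioc
    · filter_upwards [ae_restrict_mem measurableSet_Ioc] with t ht
      rw [Real.norm_of_nonneg (Real.rpow_nonneg (h.pos ht.1).le m)]
      exact Real.rpow_le_rpow_of_nonpos ht.1 (h.self_le ht.1.le) hm0

theorem integral_rpow_pos (h : IsJacobiSolution k g g') (hm : -1 < m) (hr : 0 < r) :
    0 < ∫ t in 0..r, g t ^ m :=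
  intervalIntegral_pos_of_pos_on (h.intervalIntegrable_rpow hm hr.le)
    (fun _ ht => Real.rpow_pos_of_pos (h.pos ht.1) m) hr

theorem rpow_le_rpow_add_mul_integral (h : IsJacobiSolution k g g') (hk0 : 0 ≤ k 0)
    (hk : MonotoneOn k (Ici 0)) (ha : 0 < a) (hka : 0 < k a) (har : a ≤ r) :
    g r ^ m ≤ g a ^ m + |m| * ((1 + 1 / (k a * a)) * k r) * ∫ t in a..r, g t ^ m := by
  refine le_add_const_mul_integral_of_deriv_le har
    (fun t ht => (h.hasDerivAt_rpow (ha.trans_le ht.1)).continuousAt.continuousWithinAt)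
    (fun t ht => (h.hasDerivAt_rpow (ha.trans ht.1)).hasDerivWithinAt) fun t ht => ?_
  have ht0 : 0 < t := ha.trans ht.1
  have hgt := h.pos ht0
  refine mul_mul_rpow_sub_one_le m hgt (zero_le_one.trans (h.one_le_deriv ht0.le)) ?_
  calc g' t ≤ (1 + 1 / (k a * a)) * k t * g t := h.deriv_le_mul hk0 hk ha hka ht.1.le
    _ ≤ (1 + 1 / (k a * a)) * k r * g t := by gcongr; exact hk ht0.le (ha.le.trans har) ht.2.le

theorem exists_rpow_le_mul_integral (h : IsJacobiSolution k g g') (hm : -1 < m) (hk0 : 0 ≤ k 0)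
    (hk : MonotoneOn k (Ici 0)) (ha : 0 < a) (hka : 0 < k a) :
    ∃ A, ∀ r, a ≤ r → g r ^ m ≤ A * k r * ∫ t in 0..r, g t ^ m := by
  set F : ℝ → ℝ := fun r => ∫ t in 0..r, g t ^ m
  have hFa : 0 < F a := h.integral_rpow_pos hm ha
  set B := |m| * (1 + 1 / (k a * a)) with hB
  have : 0 ≤ B := by positivity
  have hga : 0 < g a ^ m := Real.rpow_pos_of_pos (h.pos ha) m
  -- The second summand is chosen so that its contribution at `r = a` is exactly `g a ^ m`.
  refine ⟨B + g a ^ m / (k a * F a), fun r har => ?_⟩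
  have hr : 0 < r := ha.trans_le har
  have hkar : k a ≤ k r := hk ha.le hr.le har
  have hkr : 0 < k r := hka.trans_le hkar
  have hsub : F r - F a = ∫ t in a..r, g t ^ m :=
    integral_interval_sub_left (h.intervalIntegrable_rpow hm hr.le)
      (h.intervalIntegrable_rpow hm ha.le)
  have hFar : F a ≤ F r := by
    rw [← sub_nonneg, hsub]
    exact integral_nonneg har fun t ht => Real.rpow_nonneg (h.pos (ha.trans_le ht.1)).le m
  calc g r ^ m ≤ g a ^ m + B * k r * (F r - F a) := by
        rw [hsub, hB, mul_assoc |m|]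
        exact h.rpow_le_rpow_add_mul_integral hk0 hk ha hka har
    _ ≤ g a ^ m + B * k r * F r := by gcongr; linarith
    _ = g a ^ m / (k a * F a) * (k a * F a) + B * k r * F r := by
        rw [div_mul_cancel₀ _ (by positivity)]
    _ ≤ g a ^ m / (k a * F a) * (k r * F r) + B * k r * F r := by gcongr
    _ = (B + g a ^ m / (k a * F a)) * k r * F r := by ring

end IsJacobiSolution

theorem stmt3_general {m a : ℝ} (hm : -1 < m) (ha : 0 < a) {k g g' : ℝ → ℝ} (hk0 : 0 ≤ k 0)
    (hka : 0 < k a) (hk_mono : MonotoneOn k (Ici 0))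
    (hk_nonint : ¬ IntegrableOn (fun r => 1 / k r) (Ici a)) (h : IsJacobiSolution k g g') :
    ¬ IntegrableOn (fun r => (∫ t in 0..r, g t ^ m) / g r ^ m) (Ici a) := by
  obtain ⟨A, hA⟩ := h.exists_rpow_le_mul_integral hm hk0 hk_mono ha hka
  have hk_meas : AEMeasurable k (volume.restrict (Ici a)) :=
    aemeasurable_restrict_of_monotoneOn measurableSet_Ici
      (hk_mono.mono (Ici_subset_Ici.2 ha.le))
  refine fun hint => hk_nonint ((hint.const_mul A).mono'
    (hk_meas.const_div 1).aestronglyMeasurable ?_)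
  filter_upwards [ae_restrict_mem measurableSet_Ici] with r (har : a ≤ r)
  have hr : 0 < r := ha.trans_le har
  have hkr : 0 < k r := hka.trans_le (hk_mono ha.le hr.le har)
  rw [Real.norm_of_nonneg (by positivity), ← mul_div_assoc,
    div_le_div_iff₀ hkr (Real.rpow_pos_of_pos (h.pos hr) m)]
  linarith [hA r har]

/-- Let `m ≥ 1` be a real number, `k : [0,∞) → (0,∞)` continuous,
nondecreasing, `k(r) → +∞`, with `∫₁^∞ dr/k(r) = +∞`, and let `g ∈ C²([0,∞))` solve
`g'' = k² g`, `g(0)=0`, `g'(0)=1`.  Then `r ↦ (∫₀^r g^m)/g(r)^m` is not integrable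
at `+∞`. -/
theorem stmt3
    (m : ℝ) (hm : 1 ≤ m)
    (k : ℝ → ℝ)
    (hk_cont : ContinuousOn k (Set.Ici 0))
    (hk_pos : ∀ r : ℝ, 0 ≤ r → 0 < k r)
    (hk_mono : MonotoneOn k (Set.Ici 0))
    (hk_infty : Filter.Tendsto k Filter.atTop Filter.atTop)
    (hk_nonint : ¬ MeasureTheory.IntegrableOn (fun r : ℝ => 1 / k r) (Set.Ici 1))
    (g g' g'' : ℝ → ℝ)
    (hg_deriv : ∀ r : ℝ, 0 ≤ r → HasDerivWithinAt g (g' r) (Set.Ici 0) r)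
    (hg'_deriv : ∀ r : ℝ, 0 ≤ r → HasDerivWithinAt g' (g'' r) (Set.Ici 0) r)
    (hg''_cont : ContinuousOn g'' (Set.Ici 0))
    (hODE : ∀ r : ℝ, 0 ≤ r → g'' r = (k r) ^ 2 * g r)
    (hg0 : g 0 = 0) (hg'0 : g' 0 = 1) :
    ¬ MeasureTheory.IntegrableOn
        (fun r : ℝ => (∫ t in (0:ℝ)..r, g t ^ m) / g r ^ m) (Set.Ici 1) :=
  stmt3_general (by linarith) one_pos (hk_pos 0 le_rfl).le (hk_pos 1 zero_le_one) hk_mono hk_nonint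
    ⟨hg_deriv, fun r hr => hODE r hr ▸ hg'_deriv r hr, hg0, hg'0⟩
end

section
/- Let m ≥ 2 be an integer and let C ≥ 0 and k ≥ 0 be real numbers. Define g(r) = r · exp( (1/(m-1)) ( C r + (k/2) r² ) ) for r ≥ 0. Then ∫₁^∞ ( ∫₀^r g(t)^{m-1} dt / g(r)^{m-1} ) dr = +∞, i.e. the function r ↦ ∫₀^r g(t)^{m-1} dt / g(r)^{m-1} is not integrable at +∞. -/
open Set MeasureTheory intervalIntegral Real

/-!
Let `h` be a positive density on `(0, ∞)` whose logarithmic derivative is at most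
`a / t + b + c * t`. On `[0, r]` with `r ≥ 1` the derivative `(t h)' = (1 + t h' / h) h` is then at
most `D r² h` for a constant `D`. Integrating it, `r h(r) ≤ D r² ∫₀^r h`, so the quotient
`(∫₀^r h) / h(r)` is at least `D⁻¹ r⁻¹`, and `r⁻¹` is not integrable at infinity. The factor `t`
absorbs the singularity `a / t` of the logarithmic derivative at the origin.
-/

section Comparison

open Filter Asymptotics

theorem mul_le_mul_integral_of_add_mul_deriv_le {h h' : ℝ → ℝ} {M r : ℝ} (hr : 0 ≤ r)
    (hcont : ContinuousOn h (Icc 0 r)) (hderiv : ∀ t ∈ Ioo 0 r, HasDerivAt h (h' t) t)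
    (hle : ∀ t ∈ Ioo 0 r, h t + t * h' t ≤ M * h t) :
    r * h r ≤ M * ∫ t in (0 : ℝ)..r, h t := by
  have hmul : ∀ t ∈ Ioo 0 r,
      HasDerivWithinAt (fun t ↦ t * h t) (h t + t * h' t) (Ioi t) t := fun t ht ↦ by
    simpa only [one_mul] using ((hasDerivAt_id' t).fun_mul (hderiv t ht)).hasDerivWithinAt
  have hcont' : ContinuousOn (fun t ↦ t * h t) (Icc 0 r) := continuousOn_id.mul hcont
  have hint : IntegrableOn (fun t ↦ M * h t) (Icc 0 r) :=
    (hcont.const_mul M).integrableOn_Icc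
  simpa only [zero_mul, sub_zero, intervalIntegral.integral_const_mul] using
    sub_le_integral_of_hasDeriv_right_of_le hr hcont' hmul hint hle

theorem one_add_add_mul_add_mul_sq_le (a b c : ℝ) {t r : ℝ} (ht : 0 ≤ t) (htr : t ≤ r)
    (hr : 1 ≤ r) :
    1 + a + b * t + c * t ^ 2 ≤ (1 + |a| + |b| + |c|) * r ^ 2 := by
  have hone : 1 ≤ r ^ 2 := one_le_pow₀ hr
  have hlin : t ≤ r ^ 2 := htr.trans (le_self_pow₀ hr two_ne_zero)
  calc 1 + a + b * t + c * t ^ 2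
      ≤ 1 + |a| + |b| * t + |c| * t ^ 2 := by gcongr <;> exact le_abs_self _
    _ ≤ 1 * r ^ 2 + |a| * r ^ 2 + |b| * r ^ 2 + |c| * r ^ 2 := by
        gcongr
        · simpa only [one_mul] using hone
        · exact le_mul_of_one_le_right (abs_nonneg a) hone
    _ = (1 + |a| + |b| + |c|) * r ^ 2 := by ring

variable {h : ℝ → ℝ} {a b c : ℝ}

theorem inv_le_mul_integral_div_of_logDeriv_le (hcont : ContinuousOn h (Ici 0))
    (hpos : ∀ t ∈ Ioi 0, 0 < h t) (hdiff : DifferentiableOn ℝ h (Ioi 0))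
    (hlog : ∀ t ∈ Ioi 0, logDeriv h t ≤ a / t + b + c * t) {r : ℝ} (hr : 1 ≤ r) :
    r⁻¹ ≤ (1 + |a| + |b| + |c|) * ((∫ t in (0 : ℝ)..r, h t) / h r) := by
  have hr₀ : 0 < r := one_pos.trans_le hr
  have hderiv : ∀ t ∈ Ioo 0 r, HasDerivAt h (deriv h t) t := fun t ht ↦
    (hdiff.differentiableAt (Ioi_mem_nhds ht.1)).hasDerivAt
  have hle : ∀ t ∈ Ioo 0 r,
      h t + t * deriv h t ≤ (1 + |a| + |b| + |c|) * r ^ 2 * h t := by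
    rintro t ⟨ht, htr⟩
    have hht : 0 < h t := hpos t ht
    calc h t + t * deriv h t
        = (1 + t * logDeriv h t) * h t := by rw [logDeriv_apply]; field_simp
      _ ≤ (1 + t * (a / t + b + c * t)) * h t := by gcongr; exact hlog t ht
      _ = (1 + a + b * t + c * t ^ 2) * h t := by field_simp; ring
      _ ≤ (1 + |a| + |b| + |c|) * r ^ 2 * h t := by
          gcongr
          exact one_add_add_mul_add_mul_sq_le a b c ht.le htr.le hr
  have hmain := mul_le_mul_integral_of_add_mul_deriv_le hr₀.le
    (hcont.mono Icc_subset_Ici_self) hderiv hle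
  rw [← mul_div_assoc, le_div_iff₀ (hpos r hr₀), inv_mul_le_iff₀ hr₀]
  refine le_of_mul_le_mul_left ?_ hr₀
  linarith

theorem not_integrableAtFilter_inv_atTop :
    ¬ IntegrableAtFilter (fun r : ℝ ↦ r⁻¹) atTop := by
  rw [integrableAtFilter_atTop_iff]
  exact fun ⟨_, hint⟩ ↦ not_integrableOn_Ici_inv hint

theorem not_integrableAtFilter_integral_div_of_logDeriv_le (hcont : ContinuousOn h (Ici 0))
    (hpos : ∀ t ∈ Ioi 0, 0 < h t) (hdiff : DifferentiableOn ℝ h (Ioi 0))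
    (hlog : ∀ t ∈ Ioi 0, logDeriv h t ≤ a / t + b + c * t) :
    ¬ IntegrableAtFilter (fun r ↦ (∫ t in (0 : ℝ)..r, h t) / h r) atTop := by
  have hO : (fun r : ℝ ↦ r⁻¹) =O[atTop] fun r ↦ (∫ t in (0 : ℝ)..r, h t) / h r := by
    refine IsBigO.of_bound (1 + |a| + |b| + |c|) ?_
    filter_upwards [eventually_ge_atTop 1] with r hr
    rw [norm_of_nonneg (inv_nonneg.2 (zero_le_one.trans hr))]
    exact (inv_le_mul_integral_div_of_logDeriv_le hcont hpos hdiff hlog hr).trans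
      (by gcongr; exact le_norm_self _)
  exact fun hint ↦ not_integrableAtFilter_inv_atTop
    (hO.integrableAtFilter measurable_inv.stronglyMeasurable.stronglyMeasurableAtFilter hint)

end Comparison

section ModelDensity

/-- The radial density `g ^ n` of the `(n + 1)`-dimensional rotationally symmetric model whose
warping function satisfies `n g' / g = n / t + C + k t`, normalised to behave like `t ^ n` at the
origin. -/
noncomputable def modelDensity (n : ℕ) (C k t : ℝ) : ℝ :=
  t ^ n * exp (C * t + k / 2 * t ^ 2)

theorem differentiable_modelDensity (n : ℕ) (C k : ℝ) :
    Differentiable ℝ (modelDensity n C k) := by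
  unfold modelDensity
  fun_prop

theorem modelDensity_pos (n : ℕ) (C k : ℝ) {t : ℝ} (ht : 0 < t) : 0 < modelDensity n C k t := by
  unfold modelDensity
  positivity

theorem logDeriv_modelDensity (n : ℕ) (C k : ℝ) {t : ℝ} (ht : t ≠ 0) :
    logDeriv (modelDensity n C k) t = n / t + C + k * t := by
  have hexponent : HasDerivAt (fun t : ℝ ↦ C * t + k / 2 * t ^ 2) (C + k * t) t :=
    (((hasDerivAt_id t).const_mul C).add ((hasDerivAt_pow 2 t).const_mul (k / 2))).congr_deriv
      (by norm_num; ring)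
  have hexp : logDeriv (fun t : ℝ ↦ exp (C * t + k / 2 * t ^ 2)) t = C + k * t := by
    rw [logDeriv_apply, hexponent.exp.deriv, mul_div_cancel_left₀ _ (exp_ne_zero _)]
  calc logDeriv (modelDensity n C k) t
      = logDeriv (· ^ n) t + logDeriv (fun t : ℝ ↦ exp (C * t + k / 2 * t ^ 2)) t :=
        logDeriv_mul t (pow_ne_zero n ht) (exp_ne_zero _) (by fun_prop) (by fun_prop)
    _ = n / t + C + k * t := by rw [logDeriv_pow, hexp, add_assoc]

theorem mul_exp_pow_eq_modelDensity {n : ℕ} (hn : n ≠ 0) (C k r : ℝ) :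
    (r * exp (1 / n * (C * r + k / 2 * r ^ 2))) ^ n = modelDensity n C k r := by
  have hn' : (n : ℝ) ≠ 0 := Nat.cast_ne_zero.2 hn
  rw [mul_pow, ← exp_nat_mul, ← mul_assoc, mul_one_div_cancel hn', one_mul, modelDensity]

theorem not_integrableOn_integral_div_modelDensity (n : ℕ) (C k R : ℝ) :
    ¬ IntegrableOn (fun r ↦ (∫ t in (0 : ℝ)..r, modelDensity n C k t) / modelDensity n C k r)
      (Ici R) := fun hint ↦
  not_integrableAtFilter_integral_div_of_logDeriv_le
    (differentiable_modelDensity n C k).continuous.continuousOn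
    (fun _ ht ↦ modelDensity_pos n C k ht)
    (differentiable_modelDensity n C k).differentiableOn
    (fun _ ht ↦ (logDeriv_modelDensity n C k (ne_of_gt ht)).le)
    ⟨Ici R, Filter.Ici_mem_atTop R, hint⟩

end ModelDensity

theorem stmt4_general
    (m : ℕ) (hm : 2 ≤ m) (C k : ℝ) (g : ℝ → ℝ)
    (hg : ∀ r : ℝ, 0 ≤ r →
      g r = r * Real.exp ((1 / ((m : ℝ) - 1)) * (C * r + (k / 2) * r ^ 2))) :
    ¬ MeasureTheory.IntegrableOn
        (fun r : ℝ => (∫ t in (0:ℝ)..r, g t ^ (m - 1)) / g r ^ (m - 1))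
        (Set.Ici 1) := by
  have hpow : ∀ r, 0 ≤ r → g r ^ (m - 1) = modelDensity (m - 1) C k r := fun r hr ↦ by
    rw [hg r hr, ← Nat.cast_pred (by lia : 0 < m)]
    exact mul_exp_pow_eq_modelDensity (by lia) C k r
  refine fun hint ↦ not_integrableOn_integral_div_modelDensity (m - 1) C k 1
    (hint.congr_fun (fun r hr ↦ ?_) measurableSet_Ici)
  have hr : 0 ≤ r := zero_le_one.trans hr
  have hintegral :
      ∫ t in (0 : ℝ)..r, g t ^ (m - 1) = ∫ t in (0 : ℝ)..r, modelDensity (m - 1) C k t :=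
    integral_congr fun t ht ↦ hpow t (uIcc_of_le hr ▸ ht).1
  simp only [hintegral, hpow r hr]

/-- Let `m ≥ 2` be an integer, `C ≥ 0`, `k ≥ 0`, and let
`g(r) = r · exp((1/(m-1))(C r + (k/2) r²))`.  Then the function
`r ↦ (∫₀^r g^{m-1})/g(r)^{m-1}` is not integrable at `+∞`. -/
theorem stmt4
    (m : ℕ) (hm : 2 ≤ m)
    (C k : ℝ) (hC : 0 ≤ C) (hk : 0 ≤ k)
    (g : ℝ → ℝ)
    (hg : ∀ r : ℝ, 0 ≤ r →
      g r = r * Real.exp ((1 / ((m : ℝ) - 1)) * (C * r + (k / 2) * r ^ 2))) :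
    ¬ MeasureTheory.IntegrableOn
        (fun r : ℝ => (∫ t in (0:ℝ)..r, g t ^ (m - 1)) / g r ^ (m - 1))
        (Set.Ici 1) :=
  stmt4_general m hm C k g hg
end

section
/- Let a < b ≤ +∞, let w ∈ C¹((a,b)) with w(t) > 0 for all t, and let c > 0. Assume that |w'(t)| ≥ c·w(t) for all t ∈ (a,b) and that w' has constant sign on (a,b) (i.e. w' ≥ 0 throughout or w' ≤ 0 throughout). Then for every continuously differentiable function v : (a,b) → ℝ with compact support in (a,b), (c²/4) ∫_a^b v(t)² w(t) dt ≤ ∫_a^b v'(t)² w(t) dt. -/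
open Set MeasureTheory

/-!
The function `W = sign(w') w` is again differentiable, with `|W| = w` and `W' = |w'| ≥ c |W|`: near
a point where `w' ≠ 0` the sign is constant, and where `w' = 0` the hypothesis forces `w = 0`. For
such a `W`,
`(v')² |W| - (c²/4) v² |W| + (c/2) (v² W)' = (v' ± (c/2) v)² |W| + (c/2) v² (W' - c |W|) ≥ 0`,
where `±` is the sign of `W`, and integrating kills the derivative of `v² W`.
-/

lemma tsupport_pow {X M : Type*} [TopologicalSpace X] [MonoidWithZero M] [NoZeroDivisors M]
    (f : X → M) {n : ℕ} (hn : n ≠ 0) : tsupport (fun x => f x ^ n) = tsupport f :=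
  congrArg closure (Function.support_pow f hn)

lemma integrable_smul_of_tsupport_subset {X E : Type*} [TopologicalSpace X] [MeasurableSpace X]
    [OpensMeasurableSpace X] [NormedAddCommGroup E] [NormedSpace ℝ E]
    {μ : Measure X} [IsFiniteMeasureOnCompacts μ] {U : Set X} {f : X → ℝ} {g : X → E}
    (hU : IsOpen U) (hf : Continuous f) (hfc : HasCompactSupport f) (hfU : tsupport f ⊆ U)
    (hg : ContinuousOn g U) : Integrable (fun x => f x • g x) μ :=
  ((hf.continuousOn.smul hg).continuous_of_tsupport_subset hU
    ((tsupport_smul_subset_left f g).trans hfU)).integrable_of_hasCompactSupport hfc.smul_right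

lemma hasDerivAt_sign_mul {f f' : ℝ → ℝ} {t : ℝ} (hf : HasDerivAt f (f' t) t)
    (hf' : ContinuousAt f' t) (h0 : f' t = 0 → f t = 0) :
    HasDerivAt (fun x => (SignType.sign (f' x) : ℝ) * f x) |f' t| t := by
  rw [← sign_mul_self]
  by_cases ht : f' t = 0
  · have hfo : f =o[nhds t] fun x => x - t := by
      simpa [ht, h0 ht] using hf.isLittleO
    have hsign : (fun x => (SignType.sign (f' x) : ℝ) * f x) =O[nhds t] f :=
      .of_bound 1 <| .of_forall fun x => by
        rcases SignType.sign (f' x) with _ | _ | _ <;> simp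
    simpa [hasDerivAt_iff_isLittleO, ht] using hsign.trans_isLittleO hfo
  · have hsign : ∀ᶠ x in nhds t, SignType.sign (f' x) = SignType.sign (f' t) := by
      simpa [ContinuousAt] using (continuousAt_sign_of_ne_zero ht).comp hf'
    refine (hf.const_mul _).congr_of_eventuallyEq ?_
    filter_upwards [hsign] with x hx
    rw [hx]

lemma const_mul_sq_mul_abs_le_of_mul_abs_le {c x y z z' : ℝ} (hc : 0 ≤ c) (hz : c * |z| ≤ z') :
    c ^ 2 / 4 * (x ^ 2 * |z|) ≤ y ^ 2 * |z| + c / 2 * (x ^ 2 * z' + 2 * x * y * z) := by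
  have hgap : 0 ≤ c / 2 * x ^ 2 * (z' - c * |z|) :=
    mul_nonneg (by positivity) (sub_nonneg.mpr hz)
  rcases abs_cases z with ⟨habs, -⟩ | ⟨habs, -⟩
  · have hsq : 0 ≤ (y + c / 2 * x) ^ 2 * |z| := by positivity
    rw [habs] at hgap hsq ⊢
    linear_combination hgap + hsq
  · have hsq : 0 ≤ (y - c / 2 * x) ^ 2 * |z| := by positivity
    rw [habs] at hgap hsq ⊢
    linear_combination hgap + hsq

lemma setIntegral_smul_deriv_eq_neg_deriv_smul {E : Type*} [NormedAddCommGroup E]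
    [NormedSpace ℝ E] {I : Set ℝ} {f : ℝ → ℝ} {g g' : ℝ → E} (hI : IsOpen I)
    (hf : ContDiff ℝ 1 f) (hfc : HasCompactSupport f) (hfI : tsupport f ⊆ I)
    (hg : ∀ t ∈ I, HasDerivAt g (g' t) t) (hg' : ContinuousOn g' I) :
    ∫ t in I, f t • g' t = -∫ t in I, deriv f t • g t := by
  have hfI' : tsupport (deriv f) ⊆ I := tsupport_deriv_subset.trans hfI
  have hg_cont : ContinuousOn g I := HasDerivAt.continuousOn hg
  rw [setIntegral_eq_integral_of_forall_compl_eq_zero fun t ht => by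
      rw [image_eq_zero_of_notMem_tsupport (mt (@hfI t) ht), zero_smul],
    setIntegral_eq_integral_of_forall_compl_eq_zero fun t ht => by
      rw [image_eq_zero_of_notMem_tsupport (mt (@hfI' t) ht), zero_smul]]
  exact integral_bilinear_hasDerivAt_right_eq_neg_left_of_integrable
    (L := ContinuousLinearMap.lsmul ℝ ℝ)
    (fun t _ => (hf.differentiable one_ne_zero t).hasDerivAt) (fun t ht => hg t (hfI ht))
    (integrable_smul_of_tsupport_subset hI hf.continuous hfc hfI hg')
    (integrable_smul_of_tsupport_subset hI (hf.continuous_deriv le_rfl) hfc.deriv hfI' hg_cont)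
    (integrable_smul_of_tsupport_subset hI hf.continuous hfc hfI hg_cont)

lemma integrable_sq_mul_of_tsupport_subset {X : Type*} [TopologicalSpace X] [MeasurableSpace X]
    [OpensMeasurableSpace X] {μ : Measure X} [IsFiniteMeasureOnCompacts μ] {U : Set X}
    {f g : X → ℝ} (hU : IsOpen U) (hf : Continuous f) (hfc : HasCompactSupport f)
    (hfU : tsupport f ⊆ U) (hg : ContinuousOn g U) : Integrable (fun x => f x ^ 2 * g x) μ :=
  integrable_smul_of_tsupport_subset hU (hf.pow 2) (hfc.comp_left (zero_pow two_ne_zero))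
    ((tsupport_pow f two_ne_zero).trans_subset hfU) hg

lemma setIntegral_sq_mul_deriv_eq_neg {I : Set ℝ} {v g g' : ℝ → ℝ} (hI : IsOpen I)
    (hv : ContDiff ℝ 1 v) (hvc : HasCompactSupport v) (hvI : tsupport v ⊆ I)
    (hg : ∀ t ∈ I, HasDerivAt g (g' t) t) (hg' : ContinuousOn g' I) :
    ∫ t in I, v t ^ 2 * g' t = -∫ t in I, 2 * v t * deriv v t * g t := by
  have hderiv : deriv (fun t => v t ^ 2) = fun t => 2 * v t * deriv v t := by
    ext t
    simp [hv.differentiable one_ne_zero t]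
  simpa only [hderiv, smul_eq_mul] using
    setIntegral_smul_deriv_eq_neg_deriv_smul hI (hv.pow 2)
      (hvc.comp_left (zero_pow two_ne_zero)) ((tsupport_pow v two_ne_zero).trans_subset hvI) hg hg'

lemma const_mul_setIntegral_sq_mul_abs_le {I : Set ℝ} {W W' v : ℝ → ℝ} {c : ℝ} (hI : IsOpen I)
    (hW : ∀ t ∈ I, HasDerivAt W (W' t) t) (hW' : ContinuousOn W' I) (hc : 0 ≤ c)
    (hlower : ∀ t ∈ I, c * |W t| ≤ W' t) (hv : ContDiff ℝ 1 v) (hvc : HasCompactSupport v)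
    (hvI : tsupport v ⊆ I) :
    c ^ 2 / 4 * ∫ t in I, v t ^ 2 * |W t| ≤ ∫ t in I, deriv v t ^ 2 * |W t| := by
  have hW_cont : ContinuousOn W I := HasDerivAt.continuousOn hW
  have hdv : Continuous (deriv v) := hv.continuous_deriv le_rfl
  have hint_v : IntegrableOn (fun t => v t ^ 2 * |W t|) I :=
    integrable_sq_mul_of_tsupport_subset hI hv.continuous hvc hvI hW_cont.abs |>.integrableOn
  have hint_dv : IntegrableOn (fun t => deriv v t ^ 2 * |W t|) I :=
    integrable_sq_mul_of_tsupport_subset hI hdv hvc.deriv (tsupport_deriv_subset.trans hvI)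
      hW_cont.abs |>.integrableOn
  have hint_W' : IntegrableOn (fun t => v t ^ 2 * W' t) I :=
    integrable_sq_mul_of_tsupport_subset hI hv.continuous hvc hvI hW' |>.integrableOn
  have hint_cross : IntegrableOn (fun t => 2 * v t * deriv v t * W t) I :=
    integrable_smul_of_tsupport_subset hI ((hv.continuous.const_mul 2).mul hdv)
      hvc.mul_left.mul_right
      (tsupport_mul_subset_left.trans (tsupport_mul_subset_right.trans hvI)) hW_cont
      |>.integrableOn
  have hint_deriv : IntegrableOn
      (fun t => c / 2 * (v t ^ 2 * W' t + 2 * v t * deriv v t * W t)) I :=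
    (hint_W'.add hint_cross).const_mul _
  calc c ^ 2 / 4 * ∫ t in I, v t ^ 2 * |W t|
      = ∫ t in I, c ^ 2 / 4 * (v t ^ 2 * |W t|) := (integral_const_mul _ _).symm
    _ ≤ ∫ t in I, (deriv v t ^ 2 * |W t| +
          c / 2 * (v t ^ 2 * W' t + 2 * v t * deriv v t * W t)) :=
        setIntegral_mono_on (hint_v.const_mul _) (hint_dv.add hint_deriv) hI.measurableSet
          fun t ht => const_mul_sq_mul_abs_le_of_mul_abs_le hc (hlower t ht)
    _ = ∫ t in I, deriv v t ^ 2 * |W t| := by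
        rw [integral_add hint_dv hint_deriv, integral_const_mul, integral_add hint_W' hint_cross,
          setIntegral_sq_mul_deriv_eq_neg hI hv hvc hvI hW hW',
          neg_add_cancel, mul_zero, add_zero]

theorem stmt8_general {I : Set ℝ} (hI : IsOpen I) {w w' : ℝ → ℝ}
    (hw_deriv : ∀ t ∈ I, HasDerivAt w (w' t) t) (hw'_cont : ContinuousOn w' I)
    (hw_nonneg : ∀ t ∈ I, 0 ≤ w t) {c : ℝ} (hc : 0 < c)
    (hlower : ∀ t ∈ I, c * w t ≤ |w' t|) {v : ℝ → ℝ} (hv : ContDiff ℝ 1 v)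
    (hvc : HasCompactSupport v) (hvI : tsupport v ⊆ I) :
    c ^ 2 / 4 * ∫ t in I, v t ^ 2 * w t ≤ ∫ t in I, deriv v t ^ 2 * w t := by
  set W : ℝ → ℝ := fun t => SignType.sign (w' t) * w t
  have hw_zero : ∀ t ∈ I, w' t = 0 → w t = 0 := fun t ht h =>
    le_antisymm (nonpos_of_mul_nonpos_right (by simpa [h] using hlower t ht) hc) (hw_nonneg t ht)
  have hW_abs : ∀ t ∈ I, |W t| = w t := fun t ht => by
    rcases eq_or_ne (w' t) 0 with h | h
    · simp [W, hw_zero t ht h]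
    · rcases h.lt_or_gt with h | h <;> simp [W, h, abs_of_nonneg (hw_nonneg t ht)]
  have hW_deriv : ∀ t ∈ I, HasDerivAt W |w' t| t := fun t ht =>
    hasDerivAt_sign_mul (hw_deriv t ht) (hw'_cont.continuousAt (hI.mem_nhds ht)) (hw_zero t ht)
  have hW_lower : ∀ t ∈ I, c * |W t| ≤ |w' t| := fun t ht => by
    rw [hW_abs t ht]
    exact hlower t ht
  have hintegral (u : ℝ → ℝ) : ∫ t in I, u t * |W t| = ∫ t in I, u t * w t :=
    setIntegral_congr_fun hI.measurableSet fun t ht => congrArg (u t * ·) (hW_abs t ht)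
  simpa only [hintegral] using
    const_mul_setIntegral_sq_mul_abs_le hI hW_deriv hw'_cont.abs hc.le hW_lower hv hvc hvI

/-- one-dimensional weighted Poincaré inequality.  Let
`I = (a,b)` with `a < b ≤ +∞`, `w ∈ C¹(I)` positive with `|w'| ≥ c w` on `I`
(`c > 0`) and `w'` of constant sign on `I`.  Then for every `C¹` function `v`
with compact support contained in `I`,
`(c²/4) ∫_I v² w ≤ ∫_I (v')² w`. -/
theorem stmt8
    (a : ℝ) (b : EReal) (hab : (a : EReal) < b)
    (I : Set ℝ) (hI : I = {t : ℝ | a < t ∧ (t : EReal) < b})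
    (w w' : ℝ → ℝ)
    (hw_deriv : ∀ t ∈ I, HasDerivAt w (w' t) t)
    (hw'_cont : ContinuousOn w' I)
    (hw_pos : ∀ t ∈ I, 0 < w t)
    (c : ℝ) (hc : 0 < c)
    (hlower : ∀ t ∈ I, c * w t ≤ |w' t|)
    (hsign : (∀ t ∈ I, 0 ≤ w' t) ∨ (∀ t ∈ I, w' t ≤ 0)) :
    ∀ v : ℝ → ℝ, ContDiff ℝ 1 v → HasCompactSupport v → tsupport v ⊆ I →
      (c ^ 2 / 4) * ∫ t in I, (v t) ^ 2 * w t ≤ ∫ t in I, (deriv v t) ^ 2 * w t := by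
  have hIo : IsOpen I :=
    hI ▸ isOpen_Ioi.inter (isOpen_lt continuous_coe_real_ereal continuous_const)
  exact fun _ => stmt8_general hIo hw_deriv hw'_cont (fun t ht => (hw_pos t ht).le) hc hlower
end

section
/- Let m ≥ 2 be an integer and α > 0 a real number. The function r ↦ e^{(m-1) r^α} ∫_r^∞ e^{-(m-1) t^α} dt, defined for r ≥ 1, is integrable on [1,∞) if and only if α > 2. -/
open Set MeasureTheory Real

/-!
Everything rests on `∫_r^∞ e^{-c t^α} dt ∼ r^{1-α} e^{-c r^α} / (c α)`: after multiplication by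
`e^{c r^α}` the function is continuous and comparable to `r^{1-α}` at infinity, which is integrable
there exactly when `1 - α < -1`. The asymptotics come from a principle for any weight `w` with
`φ w' = -w`, `φ' → 0` and `φ w → 0`: then `(φ w)' = (φ' - 1) w ∼ -w`, so L'Hôpital's rule gives
`∫_r^∞ w ∼ φ w`. For `w = e^{-c t^α}` one has `φ = t^{1-α} / (c α)`.
-/

open Filter Asymptotics Topology

lemma hasDerivAt_integral_Ioi {E : Type*} [NormedAddCommGroup E] [NormedSpace ℝ E]
    [CompleteSpace E] {f : ℝ → E} {a r : ℝ} (hf : IntegrableOn f (Ioi a)) (har : a < r)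
    (hr : ContinuousAt f r) :
    HasDerivAt (fun x => ∫ t in Ioi x, f t) (-f r) r := by
  have hmeas : StronglyMeasurableAtFilter f (𝓝 r) :=
    ⟨Ioi a, Ioi_mem_nhds har, hf.aestronglyMeasurable⟩
  have hint : IntervalIntegrable f volume a r :=
    (intervalIntegrable_iff_integrableOn_Ioc_of_le har.le).2 (hf.mono_set Ioc_subset_Ioi_self)
  have hsplit : (fun x => ∫ t in Ioi x, f t) =ᶠ[𝓝 r]
      fun x => (∫ t in Ioi a, f t) - ∫ t in a..x, f t := by
    filter_upwards [Ioi_mem_nhds har] with x hx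
    rw [← intervalIntegral.integral_Ioi_sub_Ioi hf (le_of_lt hx), sub_sub_cancel]
  have hprim := intervalIntegral.integral_hasDerivAt_right hint hmeas hr
  exact (hprim.const_sub _).congr_of_eventuallyEq hsplit

lemma isEquivalent_integral_Ioi {w w' φ φ' : ℝ → ℝ} {a : ℝ} (hint : IntegrableOn w (Ioi a))
    (hw0 : ∀ᶠ x in atTop, w x ≠ 0) (hw : ∀ᶠ x in atTop, HasDerivAt w (w' x) x)
    (hφ : ∀ᶠ x in atTop, HasDerivAt φ (φ' x) x) (hφw : ∀ᶠ x in atTop, φ x * w' x = -w x)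
    (hφ' : Tendsto φ' atTop (𝓝 0)) (hlim : Tendsto (fun x => φ x * w x) atTop (𝓝 0)) :
    (fun r => ∫ t in Ioi r, w t) ~[atTop] fun r => φ r * w r := by
  have htail : ∀ᶠ x in atTop, HasDerivAt (fun r => ∫ t in Ioi r, w t) (-w x) x := by
    filter_upwards [hw, eventually_gt_atTop a] with x hwx hx
    exact hasDerivAt_integral_Ioi hint hx hwx.continuousAt
  have hprod : ∀ᶠ x in atTop, HasDerivAt (fun r => φ r * w r) ((φ' x - 1) * w x) x := by
    filter_upwards [hw, hφ, hφw] with x hwx hφx hφwx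
    exact (hφx.mul hwx).congr_deriv (by rw [hφwx]; ring)
  have hφ1 : ∀ᶠ x in atTop, φ' x - 1 ≠ 0 :=
    (hφ'.eventually_ne zero_ne_one).mono fun _ => sub_ne_zero.2
  have hprod0 : ∀ᶠ x in atTop, (φ' x - 1) * w x ≠ 0 := by
    filter_upwards [hφ1, hw0] with x h1 h2 using mul_ne_zero h1 h2
  have hratio : Tendsto (fun x => -w x / ((φ' x - 1) * w x)) atTop (𝓝 1) := by
    have hinv : Tendsto (fun x => -(φ' x - 1)⁻¹) atTop (𝓝 1) := by
      simpa using ((hφ'.sub_const 1).inv₀ (by norm_num)).neg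
    refine hinv.congr' ?_
    filter_upwards [hφ1, hw0] with x h1 h2
    field_simp
  exact isEquivalent_of_tendsto_one <| HasDerivAt.lhopital_zero_atTop htail hprod hprod0
    (tendsto_integral_Ioi_zero tendsto_id) hlim hratio

lemma integrableOn_Ici_iff_of_isTheta {X E F : Type*} [TopologicalSpace X]
    [SecondCountableTopology X] [MeasurableSpace X] [LinearOrder X] [CompactIccSpace X]
    [IsMeasurablyGenerated (atTop : Filter X)] [NormedAddCommGroup E] [NormedAddCommGroup F]
    {f : X → E} {g : X → F} {a : X} {μ : Measure X} (hf : LocallyIntegrableOn f (Ici a) μ)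
    (hg : StronglyMeasurableAtFilter g atTop μ) (hfg : f =Θ[atTop] g) :
    IntegrableOn f (Ici a) μ ↔ IntegrableAtFilter g atTop μ := by
  refine ⟨fun h => ?_, hf.integrableOn_of_isBigO_atTop hfg.isBigO⟩
  exact hfg.symm.isBigO.integrableAtFilter hg ⟨Ici a, Ici_mem_atTop a, h⟩

section StretchedExponential

variable {c α : ℝ}

lemma hasDerivAt_exp_neg_mul_rpow {x : ℝ} (hx : x ≠ 0) :
    HasDerivAt (fun t => exp (-(c * t ^ α))) (-(c * α * x ^ (α - 1) * exp (-(c * x ^ α)))) x :=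
  (((hasDerivAt_rpow_const (.inl hx)).const_mul c).fun_neg.exp).congr_deriv (by ring)

lemma integrableOn_exp_neg_mul_rpow (hc : 0 < c) (hα : 0 < α) :
    IntegrableOn (fun t => exp (-(c * t ^ α))) (Ioi 0) := by
  simpa only [rpow_zero, one_mul, neg_mul] using
    integrableOn_rpow_mul_exp_neg_mul_rpow (s := 0) neg_one_lt_zero hα hc

lemma tendsto_rpow_mul_exp_neg_mul_rpow (hc : 0 < c) (hα : 0 < α) (s : ℝ) :
    Tendsto (fun t => t ^ s * exp (-(c * t ^ α))) atTop (𝓝 0) := by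
  refine ((tendsto_rpow_mul_exp_neg_mul_atTop_nhds_zero (s / α) c hc).comp
    (tendsto_rpow_atTop hα)).congr' ?_
  filter_upwards [eventually_ge_atTop 0] with t ht
  rw [Function.comp_apply, ← rpow_mul ht, mul_div_cancel₀ _ hα.ne', neg_mul]

lemma isEquivalent_integral_Ioi_exp_neg_mul_rpow (hc : 0 < c) (hα : 0 < α) :
    (fun r => ∫ t in Ioi r, exp (-(c * t ^ α))) ~[atTop]
      fun r => (c * α)⁻¹ * r ^ (1 - α) * exp (-(c * r ^ α)) := by
  refine isEquivalent_integral_Ioi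
    (w' := fun x => -(c * α * x ^ (α - 1) * exp (-(c * x ^ α))))
    (φ' := fun x => (c * α)⁻¹ * ((1 - α) * x ^ (-α)))
    (integrableOn_exp_neg_mul_rpow hc hα) (.of_forall fun _ => exp_ne_zero _) ?_ ?_ ?_ ?_ ?_
  · filter_upwards [eventually_ne_atTop 0] with x hx using hasDerivAt_exp_neg_mul_rpow hx
  · filter_upwards [eventually_ne_atTop 0] with x hx
    exact ((hasDerivAt_rpow_const (.inl hx)).const_mul _).congr_deriv (by rw [sub_sub_cancel_left])
  · filter_upwards [eventually_gt_atTop 0] with x hx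
    have hpow : x ^ (1 - α) * x ^ (α - 1) = 1 := by
      rw [← rpow_add hx, sub_add_sub_cancel, sub_self, rpow_zero]
    linear_combination (-(c * α)⁻¹ * (c * α) * exp (-(c * x ^ α))) * hpow -
      exp (-(c * x ^ α)) * inv_mul_cancel₀ (mul_pos hc hα).ne'
  · simpa using ((tendsto_rpow_neg_atTop hα).const_mul (1 - α)).const_mul (c * α)⁻¹
  · simpa [mul_assoc] using
      (tendsto_rpow_mul_exp_neg_mul_rpow hc hα (1 - α)).const_mul (c * α)⁻¹

lemma isTheta_exp_mul_integral_Ioi (hc : 0 < c) (hα : 0 < α) :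
    (fun r => exp (c * r ^ α) * ∫ t in Ioi r, exp (-(c * t ^ α))) =Θ[atTop]
      fun r : ℝ => r ^ (1 - α) := by
  calc (fun r => exp (c * r ^ α) * ∫ t in Ioi r, exp (-(c * t ^ α)))
    _ ~[atTop] fun r => exp (c * r ^ α) * ((c * α)⁻¹ * r ^ (1 - α) * exp (-(c * r ^ α))) :=
      IsEquivalent.refl.mul (isEquivalent_integral_Ioi_exp_neg_mul_rpow hc hα)
    _ = fun r => (c * α)⁻¹ * r ^ (1 - α) := by
      funext r
      rw [mul_left_comm, ← exp_add, add_neg_cancel, exp_zero, mul_one]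
    _ =Θ[atTop] fun r => r ^ (1 - α) :=
      (isTheta_const_mul_left (inv_ne_zero (mul_pos hc hα).ne')).2 (isTheta_refl _ _)

lemma continuousOn_exp_mul_integral_Ioi (hc : 0 < c) (hα : 0 < α) :
    ContinuousOn (fun r => exp (c * r ^ α) * ∫ t in Ioi r, exp (-(c * t ^ α))) (Ici 0) :=
  ((continuous_rpow_const hα.le).const_mul c).rexp.continuousOn.mul
    (integrableOn_exp_neg_mul_rpow hc hα).continuousOn_Ici_primitive_Ioi

end StretchedExponential

theorem stmt9_general {c α a : ℝ} (hc : 0 < c) (hα : 0 < α) (ha : 0 ≤ a) :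
    IntegrableOn (fun r => exp (c * r ^ α) * ∫ t in Ioi r, exp (-(c * t ^ α))) (Ici a) ↔
      2 < α := by
  have hloc : LocallyIntegrableOn
      (fun r => exp (c * r ^ α) * ∫ t in Ioi r, exp (-(c * t ^ α))) (Ici a) :=
    ((continuousOn_exp_mul_integral_Ioi hc hα).mono (Ici_subset_Ici.2 ha)).locallyIntegrableOn
      measurableSet_Ici
  have hmeas : StronglyMeasurableAtFilter (fun r : ℝ => r ^ (1 - α)) atTop :=
    (measurable_id.pow_const _).stronglyMeasurable.stronglyMeasurableAtFilter
  rw [integrableOn_Ici_iff_of_isTheta hloc hmeas (isTheta_exp_mul_integral_Ioi hc hα),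
    integrableAtFilter_rpow_atTop_iff]
  constructor <;> intro h <;> linarith

/-- for an integer `m ≥ 2` and a real `α > 0`, the function
`r ↦ e^{(m-1) r^α} ∫_r^∞ e^{-(m-1) t^α} dt` is integrable on `[1,∞)` if and
only if `α > 2`. -/
theorem stmt9
    (m : ℕ) (hm : 2 ≤ m) (α : ℝ) (hα : 0 < α) :
    MeasureTheory.IntegrableOn
        (fun r : ℝ =>
          Real.exp (((m : ℝ) - 1) * r ^ α) *
            ∫ t in Set.Ioi r, Real.exp (-(((m : ℝ) - 1) * t ^ α)))
        (Set.Ici 1) ↔ 2 < α :=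
  stmt9_general (sub_pos.2 (Nat.one_lt_cast.2 hm)) hα zero_le_one
end

section
/- Let n > 1 be a real number, R₀ ≥ 0, λ > 0, and let g ∈ C¹([R₀,∞)) with g(r) > 0 for all r ≥ R₀. Assume that either (i) ∫^∞ g(r)^{1-n} dr < +∞, or (ii) ∫^∞ g(r)^{1-n} dr = +∞ and in addition either ∫^∞ g(r)^{n-1} dr = +∞ or ∫_{R₀}^∞ ( ∫_r^∞ g(t)^{n-1} dt / g(r)^{n-1} ) dr = +∞. Then there exists a function β ∈ C²([R₀,∞)) satisfying β''(r) + (n-1)(g'(r)/g(r)) β'(r) = λ β(r) for all r ≥ R₀, with β(R₀) = 1, 0 < β(r) ≤ 1 and β'(r) ≤ 0 for all r ≥ R₀, and β(r) → 0 as r → +∞. -/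
open Set Filter MeasureTheory Real

/-!
Every continuous linear equation on a half-line has global solutions: in the Bielecki norm
`sup ‖y t‖ exp (-2 ∫ₐᵗ ‖A‖)` the Picard map is a contraction. With `w = g ^ (n - 1)` the radial
equation is `(w β')' = λ w β`. More generally `(w u')' = m u`, with `w > 0` and `m ≥ 0`, has a
solution `u` with `u(a) = w(a) u'(a) = 1`; it stays positive together with its flux `q = w u'`
because `(u q)' ≥ 0`. As `q` is nondecreasing, `q(r) ∫_r^∞ 1/(w u²) ≤ ∫_r^∞ u'/u² ≤ 1/u(r)`. Hence
reduction of order yields the positive solution `u ∫_r^∞ 1/(w u²)`, and the same bound says that it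
is nonincreasing. If `1/w` is integrable, this solution `β` is at most `u(a)⁻¹ ∫_r^∞ 1/w`, which
tends to `0`. If `β` has a limit `l > 0`, integrating the equation once gives
`l ∫_r^∞ m ≤ -w β'`, and integrating again shows that `(∫_r^∞ m) / w` is integrable, so both
Feller integrals of the second alternative converge.
-/

/-! ## Linear differential equations on a half-line -/

section LinearODE

variable {E : Type*} [NormedAddCommGroup E] [NormedSpace ℝ E] {A : ℝ → E →L[ℝ] E} {a : ℝ}

/-- The weight `exp (2 ∫ₐᵗ ‖A‖)` of the Bielecki norm `sup ‖y t‖ / W t`. The factor `2` makes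
integration against `A` a contraction of ratio `1 / 2`. -/
noncomputable def bieleckiWeight (A : ℝ → E →L[ℝ] E) (a t : ℝ) : ℝ :=
  exp (2 * ∫ s in a..t, ‖A s‖)

theorem bieleckiWeight_pos (A : ℝ → E →L[ℝ] E) (a t : ℝ) : 0 < bieleckiWeight A a t :=
  exp_pos _

theorem one_le_bieleckiWeight (A : ℝ → E →L[ℝ] E) {t : ℝ} (ht : a ≤ t) :
    1 ≤ bieleckiWeight A a t :=
  one_le_exp (mul_nonneg zero_le_two
    (intervalIntegral.integral_nonneg ht fun s _ => norm_nonneg (A s)))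

theorem hasDerivAt_bieleckiWeight (hA : Continuous A) (t : ℝ) :
    HasDerivAt (bieleckiWeight A a) (2 * (‖A t‖ * bieleckiWeight A a t)) t :=
  ((hA.norm.integral_hasStrictDerivAt a t).hasDerivAt.const_mul 2).exp.congr_deriv
    (by rw [bieleckiWeight]; ring)

theorem continuous_bieleckiWeight (hA : Continuous A) : Continuous (bieleckiWeight A a) :=
  continuous_iff_continuousAt.2 fun t => (hasDerivAt_bieleckiWeight hA t).continuousAt

theorem integral_norm_mul_bieleckiWeight (hA : Continuous A) (t : ℝ) :
    ∫ s in a..t, ‖A s‖ * bieleckiWeight A a s = (bieleckiWeight A a t - 1) / 2 := by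
  have hderiv (s : ℝ) : HasDerivAt (fun s => bieleckiWeight A a s / 2)
      (‖A s‖ * bieleckiWeight A a s) s :=
    ((hasDerivAt_bieleckiWeight hA s).div_const 2).congr_deriv (by ring)
  have hcont : Continuous fun s => ‖A s‖ * bieleckiWeight A a s :=
    hA.norm.mul (continuous_bieleckiWeight hA)
  rw [intervalIntegral.integral_eq_sub_of_hasDerivAt (fun s _ => hderiv s)
    (hcont.intervalIntegrable a t)]
  simp [bieleckiWeight, sub_div]

theorem norm_integral_apply_bieleckiWeight_smul_le (hA : Continuous A) {y : ℝ → E} {C t : ℝ}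
    (hy : ∀ s, ‖y s‖ ≤ C) (ht : a ≤ t) :
    ‖∫ s in a..t, A s (bieleckiWeight A a s • y s)‖ ≤ bieleckiWeight A a t * (C / 2) := by
  have hC : 0 ≤ C := (norm_nonneg _).trans (hy a)
  have hbound (s : ℝ) : ‖A s (bieleckiWeight A a s • y s)‖ ≤ ‖A s‖ * bieleckiWeight A a s * C := by
    have hW := bieleckiWeight_pos A a s
    calc ‖A s (bieleckiWeight A a s • y s)‖ ≤ ‖A s‖ * ‖bieleckiWeight A a s • y s‖ :=
          (A s).le_opNorm _
      _ = ‖A s‖ * bieleckiWeight A a s * ‖y s‖ := by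
          rw [norm_smul, Real.norm_of_nonneg hW.le, mul_assoc]
      _ ≤ ‖A s‖ * bieleckiWeight A a s * C := by gcongr; exact hy s
  calc ‖∫ s in a..t, A s (bieleckiWeight A a s • y s)‖
      ≤ ∫ s in a..t, ‖A s‖ * bieleckiWeight A a s * C :=
        intervalIntegral.norm_integral_le_of_norm_le ht (Eventually.of_forall fun s _ => hbound s)
          (((hA.norm.mul (continuous_bieleckiWeight hA)).mul_const C).intervalIntegrable a t)
    _ = (bieleckiWeight A a t - 1) / 2 * C := by
        rw [intervalIntegral.integral_mul_const, integral_norm_mul_bieleckiWeight hA]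
    _ ≤ bieleckiWeight A a t * (C / 2) := by linarith

theorem continuous_apply_bieleckiWeight_smul (hA : Continuous A) {y : ℝ → E}
    (hy : Continuous y) : Continuous fun s => A s (bieleckiWeight A a s • y s) :=
  hA.clm_apply ((continuous_bieleckiWeight hA).smul hy)

open scoped BoundedContinuousFunction

/-- The Picard map `y ↦ x₀ + ∫ₐᵗ A y` conjugated by the Bielecki weight `W`, so that it acts on
the bounded functions `f = y / W`. Its values are frozen to the left of `a`. -/
noncomputable def bieleckiPicard (hA : Continuous A) (a : ℝ) (x₀ : E) (f : ℝ →ᵇ E) : ℝ →ᵇ E :=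
  .ofNormedAddCommGroup
    (fun t => (bieleckiWeight A a (max a t))⁻¹ •
      (x₀ + ∫ s in a..max a t, A s (bieleckiWeight A a s • f s)))
    (by
      have hprimitive : Continuous fun t => ∫ s in a..t, A s (bieleckiWeight A a s • f s) :=
        intervalIntegral.continuous_primitive
          (continuous_apply_bieleckiWeight_smul hA f.continuous).intervalIntegrable a
      have hinv := (continuous_bieleckiWeight (a := a) hA).inv₀
        fun t => (bieleckiWeight_pos A a t).ne'
      exact (hinv.smul (hprimitive.const_add x₀)).comp (continuous_const.max continuous_id))
    (‖x₀‖ + ‖f‖ / 2)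
    (by
      intro t
      have ht := le_max_left a t
      have hW := bieleckiWeight_pos A a (max a t)
      have hint := norm_integral_apply_bieleckiWeight_smul_le hA f.norm_coe_le_norm ht
      rw [norm_smul, norm_inv, Real.norm_of_nonneg hW.le, inv_mul_le_iff₀ hW]
      refine (norm_add_le_of_le le_rfl hint).trans ?_
      rw [mul_add]
      gcongr
      exact le_mul_of_one_le_left (norm_nonneg x₀) (one_le_bieleckiWeight A ht))

theorem contractingWith_bieleckiPicard (hA : Continuous A) (a : ℝ) (x₀ : E) :
    ContractingWith (1 / 2) (bieleckiPicard hA a x₀) := by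
  refine ⟨by norm_num [← NNReal.coe_lt_coe], LipschitzWith.of_dist_le_mul fun f g => ?_⟩
  refine (BoundedContinuousFunction.dist_le (by positivity)).2 fun t => ?_
  have hW := bieleckiWeight_pos A a (max a t)
  have hint (f : ℝ →ᵇ E) : IntervalIntegrable
      (fun s => A s (bieleckiWeight A a s • f s)) volume a (max a t) :=
    (continuous_apply_bieleckiWeight_smul hA f.continuous).intervalIntegrable _ _
  have hdiff : bieleckiPicard hA a x₀ f t - bieleckiPicard hA a x₀ g t =
      (bieleckiWeight A a (max a t))⁻¹ •
        ∫ s in a..max a t, A s (bieleckiWeight A a s • (f - g) s) := by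
    simp only [BoundedContinuousFunction.sub_apply, smul_sub, map_sub]
    rw [intervalIntegral.integral_sub (hint f) (hint g)]
    simp only [bieleckiPicard, BoundedContinuousFunction.coe_ofNormedAddCommGroup, ← smul_sub,
      add_sub_add_left_eq_sub]
  rw [dist_eq_norm, dist_eq_norm, hdiff, norm_smul, norm_inv, Real.norm_of_nonneg hW.le,
    inv_mul_le_iff₀ hW]
  refine (norm_integral_apply_bieleckiWeight_smul_le hA (f - g).norm_coe_le_norm
    (le_max_left a t)).trans_eq ?_
  norm_num [div_eq_inv_mul]

variable [CompleteSpace E]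

theorem exists_isIntegralCurveOn_Ici_of_continuous (hA : Continuous A) (x₀ : E) :
    ∃ y : ℝ → E, y a = x₀ ∧ IsIntegralCurveOn y (fun t => A t) (Ici a) := by
  obtain ⟨f, hf⟩ : ∃ f, bieleckiPicard hA a x₀ f = f :=
    ⟨_, (contractingWith_bieleckiPicard hA a x₀).fixedPoint_isFixedPt⟩
  have hAf := continuous_apply_bieleckiWeight_smul (a := a) hA f.continuous
  have hfix {t : ℝ} (ht : a ≤ t) :
      x₀ + ∫ s in a..t, A s (bieleckiWeight A a s • f s) = bieleckiWeight A a t • f t := by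
    rw [← inv_smul_eq_iff₀ (bieleckiWeight_pos A a t).ne']
    conv_rhs => rw [← hf]
    simp [bieleckiPicard, max_eq_right ht]
  refine ⟨fun t => x₀ + ∫ s in a..t, A s (bieleckiWeight A a s • f s), by simp, fun t ht => ?_⟩
  beta_reduce
  rw [hfix ht]
  exact ((hAf.integral_hasStrictDerivAt a t).hasDerivAt.const_add x₀).hasDerivWithinAt

theorem exists_isIntegralCurveOn_Ici (hA : ContinuousOn A (Ici a)) (x₀ : E) :
    ∃ y : ℝ → E, y a = x₀ ∧ IsIntegralCurveOn y (fun t => A t) (Ici a) := by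
  have hA' : Continuous fun t => A (max a t) :=
    hA.comp_continuous (continuous_const.max continuous_id) fun t => le_max_left a t
  obtain ⟨y, hya, hy⟩ := exists_isIntegralCurveOn_Ici_of_continuous (a := a) hA' x₀
  exact ⟨y, hya, fun t ht => (hy t ht).congr_deriv (by simp only [max_eq_right ht.out])⟩

end LinearODE

/-! ## Monotone functions and integrals on a half-line -/

section HalfLine

variable {F F' φ : ℝ → ℝ} {a : ℝ}

theorem monotoneOn_Ici_of_hasDerivWithinAt_nonneg
    (hF : ∀ r, a ≤ r → HasDerivWithinAt F (F' r) (Ici a) r) (hF' : ∀ r, a ≤ r → 0 ≤ F' r) :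
    MonotoneOn F (Ici a) :=
  monotoneOn_of_hasDerivWithinAt_nonneg (convex_Ici a)
    (fun r hr => (hF r hr).continuousWithinAt)
    (fun r hr => (hF r (interior_subset hr)).mono interior_subset)
    fun r hr => hF' r (interior_subset hr)

theorem antitoneOn_Ici_of_hasDerivWithinAt_nonpos
    (hF : ∀ r, a ≤ r → HasDerivWithinAt F (F' r) (Ici a) r) (hF' : ∀ r, a ≤ r → F' r ≤ 0) :
    AntitoneOn F (Ici a) :=
  antitoneOn_of_hasDerivWithinAt_nonpos (convex_Ici a)
    (fun r hr => (hF r hr).continuousWithinAt)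
    (fun r hr => (hF r (interior_subset hr)).mono interior_subset)
    fun r hr => hF' r (interior_subset hr)

theorem exists_tendsto_atTop_of_antitoneOn_Ici {c : ℝ} (hF : AntitoneOn F (Ici a))
    (hc : ∀ r, a ≤ r → c ≤ F r) :
    ∃ l, Tendsto F atTop (nhds l) ∧ c ≤ l ∧ ∀ r, a ≤ r → l ≤ F r := by
  have hanti : Antitone fun r => F (max a r) := fun r s hrs =>
    hF (le_max_left a r) (le_max_left a s) (max_le_max le_rfl hrs)
  have hbdd : BddBelow (range fun r => F (max a r)) :=
    ⟨c, forall_mem_range.2 fun r => hc _ (le_max_left a r)⟩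
  have heq : (fun r => F (max a r)) =ᶠ[atTop] F := by
    filter_upwards [eventually_ge_atTop a] with r hr
    rw [max_eq_right hr]
  refine ⟨⨅ r, F (max a r), (tendsto_atTop_ciInf hanti hbdd).congr' heq,
    le_ciInf fun r => hc _ (le_max_left a r), fun r hr => ?_⟩
  simpa only [max_eq_right hr] using ciInf_le hbdd r

theorem integrableOn_Ioi_of_le_neg_deriv
    (hF : ∀ r, a ≤ r → HasDerivWithinAt F (F' r) (Ici a) r) (hF0 : ∀ r, a ≤ r → 0 ≤ F r)
    (hφ : ContinuousOn φ (Ici a)) (hφ0 : ∀ r, a ≤ r → 0 ≤ φ r)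
    (hφF : ∀ r, a ≤ r → φ r ≤ -F' r) :
    IntegrableOn φ (Ioi a) ∧ ∫ r in Ioi a, φ r ≤ F a := by
  have hF' : ∀ r, a ≤ r → F' r ≤ 0 := fun r hr => by linarith [hφ0 r hr, hφF r hr]
  have hderiv : ∀ r ∈ Ioi a, HasDerivAt F (F' r) r := fun r hr =>
    (hF r hr.out.le).hasDerivAt (Ici_mem_nhds hr)
  have hcont : ContinuousWithinAt F (Ici a) a := (hF a le_rfl).continuousWithinAt
  obtain ⟨l, hlim, hl, -⟩ := exists_tendsto_atTop_of_antitoneOn_Ici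
    (antitoneOn_Ici_of_hasDerivWithinAt_nonpos hF hF') hF0
  have hF'int : IntegrableOn F' (Ioi a) :=
    integrableOn_Ioi_deriv_of_nonpos hcont hderiv (fun r hr => hF' r hr.out.le) hlim
  have hφint : IntegrableOn φ (Ioi a) := by
    refine hF'int.neg.mono' ((hφ.mono Ioi_subset_Ici_self).aestronglyMeasurable measurableSet_Ioi)
      (ae_restrict_of_forall_mem measurableSet_Ioi fun r hr => ?_)
    rw [Real.norm_of_nonneg (hφ0 r hr.out.le)]
    exact hφF r hr.out.le
  refine ⟨hφint, ?_⟩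
  calc ∫ r in Ioi a, φ r ≤ ∫ r in Ioi a, -F' r :=
        setIntegral_mono_on hφint hF'int.neg measurableSet_Ioi fun r hr => hφF r hr.out.le
    _ = F a - l := by
        rw [integral_neg, integral_Ioi_of_hasDerivAt_of_tendsto hcont hderiv hF'int hlim, neg_sub]
    _ ≤ F a := sub_le_self _ hl

theorem hasDerivWithinAt_integral_Ioi (hφ : ContinuousOn φ (Ici a))
    (hφint : IntegrableOn φ (Ioi a)) {r : ℝ} (hr : a ≤ r) :
    HasDerivWithinAt (fun s => ∫ t in Ioi s, φ t) (-φ r) (Ici a) r := by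
  have hsplit {s : ℝ} (hs : a ≤ s) :
      ∫ t in Ioi s, φ t = (∫ t in Ioi a, φ t) - ∫ t in a..s, φ t :=
    eq_sub_of_add_eq' (intervalIntegral.integral_interval_add_Ioi hφint
      (hφint.mono_set (Ioi_subset_Ioi hs)))
  have hφ_Icc : ContinuousOn φ (Icc a (r + 1)) := hφ.mono Icc_subset_Ici_self
  have hr_mem : r ∈ Icc a (r + 1) := ⟨hr, by linarith⟩
  have hnhds : Icc a (r + 1) ∈ nhdsWithin r (Ici a) :=
    inter_mem self_mem_nhdsWithin (mem_nhdsWithin_of_mem_nhds (Iic_mem_nhds (lt_add_one r)))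
  have : Fact (r ∈ Icc a (r + 1)) := ⟨hr_mem⟩
  have hprimitive : HasDerivWithinAt (fun s => ∫ t in a..s, φ t) (φ r) (Icc a (r + 1)) r :=
    intervalIntegral.integral_hasDerivWithinAt_right
      ((hφ.mono (by rw [uIcc_of_le hr]; exact Icc_subset_Ici_self)).intervalIntegrable)
      (hφ_Icc.stronglyMeasurableAtFilter_nhdsWithin measurableSet_Icc r) (hφ_Icc r hr_mem)
  exact ((hprimitive.mono_of_mem_nhdsWithin hnhds).const_sub _).congr (fun s hs => hsplit hs)
    (hsplit hr)

end HalfLine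

/-! ## Sturm–Liouville equations -/

/-- `u` is a solution of the Sturm–Liouville equation `(w u')' = m u` on `[a, ∞)`. The equation is
encoded as a first-order system for `u` and its flux `q = w u'`, so that `w` need not be
differentiable. -/
structure IsSturmLiouvilleSolution (w m : ℝ → ℝ) (a : ℝ) (u q : ℝ → ℝ) : Prop where
  hasDerivWithinAt : ∀ r, a ≤ r → HasDerivWithinAt u (q r / w r) (Ici a) r
  hasDerivWithinAt_flux : ∀ r, a ≤ r → HasDerivWithinAt q (m r * u r) (Ici a) r

/-- The second solution `u(r) ∫_r^∞ 1/(w u²)` of `(w u')' = m u` produced by reduction of order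
from a solution `u`. It is negligible against `u` at infinity, hence recessive. -/
noncomputable def recessiveSolution (w u : ℝ → ℝ) (r : ℝ) : ℝ :=
  u r * ∫ t in Ioi r, (w t * u t ^ 2)⁻¹

/-- The Feller property of `(w u')' = m u` at infinity, that some positive nonincreasing
solution vanishes there, expressed by Feller's integral test for the scale density `w⁻¹` and the
speed density `m`. The inner integral of the last alternative is the junk value `0` unless `m` is
integrable, a case which the second alternative covers. -/
def IsFellerAtTop (w m : ℝ → ℝ) (a : ℝ) : Prop :=
  IntegrableOn (fun r => (w r)⁻¹) (Ici a) ∨ ¬ IntegrableOn m (Ici a) ∨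
    ¬ IntegrableOn (fun r => (∫ t in Ioi r, m t) / w r) (Ici a)

section SturmLiouville

variable {w m u q : ℝ → ℝ} {a : ℝ}

theorem exists_isSturmLiouvilleSolution (hw : ContinuousOn w (Ici a))
    (hw0 : ∀ r, a ≤ r → w r ≠ 0) (hm : ContinuousOn m (Ici a)) (u₀ q₀ : ℝ) :
    ∃ u q, IsSturmLiouvilleSolution w m a u q ∧ u a = u₀ ∧ q a = q₀ := by
  set A : ℝ → ℝ × ℝ →L[ℝ] ℝ × ℝ := fun r =>
    (w r)⁻¹ • (.inl ℝ ℝ ℝ ∘L .snd ℝ ℝ ℝ) + m r • (.inr ℝ ℝ ℝ ∘L .fst ℝ ℝ ℝ) with hA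
  have hAc : ContinuousOn A (Ici a) :=
    ((hw.inv₀ hw0).smul continuousOn_const).add (hm.smul continuousOn_const)
  obtain ⟨y, hya, hy⟩ := exists_isIntegralCurveOn_Ici hAc (u₀, q₀)
  refine ⟨fun r => (y r).1, fun r => (y r).2, ⟨fun r hr => ?_, fun r hr => ?_⟩, by simp [hya],
    by simp [hya]⟩
  · exact (hasFDerivAt_fst.comp_hasDerivWithinAt r (hy r hr)).congr_deriv
      (by simp [hA, div_eq_inv_mul])
  · exact (hasFDerivAt_snd.comp_hasDerivWithinAt r (hy r hr)).congr_deriv (by simp [hA])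

theorem recessiveSolution_pos (hw0 : ∀ r, a ≤ r → 0 < w r) (hu : ∀ r, a ≤ r → 0 < u r)
    (hint : IntegrableOn (fun r => (w r * u r ^ 2)⁻¹) (Ioi a)) {r : ℝ} (hr : a ≤ r) :
    0 < recessiveSolution w u r := by
  have hpos (t : ℝ) (ht : t ∈ Ioi r) : 0 < (w t * u t ^ 2)⁻¹ := by
    have hat : a ≤ t := hr.trans ht.out.le
    exact inv_pos.2 (mul_pos (hw0 t hat) (pow_pos (hu t hat) 2))
  have hsupport : Function.support (fun t => (w t * u t ^ 2)⁻¹) ∩ Ioi r = Ioi r :=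
    inter_eq_right.2 fun t ht => (hpos t ht).ne'
  refine mul_pos (hu r hr) ((setIntegral_pos_iff_support_of_nonneg_ae
    (ae_restrict_of_forall_mem measurableSet_Ioi fun t ht => (hpos t ht).le)
    (hint.mono_set (Ioi_subset_Ioi hr))).2 ?_)
  rw [hsupport, Real.volume_Ioi]
  exact ENNReal.zero_lt_top

theorem recessiveSolution_le (hw0 : ∀ r, a ≤ r → 0 < w r) (hu : ∀ r, a ≤ r → 0 < u r)
    (hu_mono : MonotoneOn u (Ici a)) (hint : IntegrableOn (fun r => (w r * u r ^ 2)⁻¹) (Ioi a))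
    (hw_int : IntegrableOn (fun r => (w r)⁻¹) (Ioi a)) {r : ℝ} (hr : a ≤ r) :
    recessiveSolution w u r ≤ (u a)⁻¹ * ∫ t in Ioi r, (w t)⁻¹ := by
  have hua := hu a le_rfl
  have hle (t : ℝ) (ht : t ∈ Ioi r) : u r * (w t * u t ^ 2)⁻¹ ≤ (u a)⁻¹ * (w t)⁻¹ := by
    have hat : a ≤ t := hr.trans ht.out.le
    have hwt := hw0 t hat
    have hut := hu t hat
    calc u r * (w t * u t ^ 2)⁻¹ ≤ u t * (w t * u t ^ 2)⁻¹ := by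
          gcongr
          exact hu_mono hr hat ht.out.le
      _ = (u t)⁻¹ * (w t)⁻¹ := by field_simp
      _ ≤ (u a)⁻¹ * (w t)⁻¹ := by
          gcongr
          exact hu_mono self_mem_Ici hat hat
  rw [recessiveSolution, ← integral_const_mul, ← integral_const_mul]
  exact setIntegral_mono_on ((hint.mono_set (Ioi_subset_Ioi hr)).const_mul _)
    ((hw_int.mono_set (Ioi_subset_Ioi hr)).const_mul _) measurableSet_Ioi hle

theorem tendsto_recessiveSolution_zero (hw0 : ∀ r, a ≤ r → 0 < w r)
    (hu : ∀ r, a ≤ r → 0 < u r) (hu_mono : MonotoneOn u (Ici a))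
    (hint : IntegrableOn (fun r => (w r * u r ^ 2)⁻¹) (Ioi a))
    (hw_int : IntegrableOn (fun r => (w r)⁻¹) (Ioi a)) :
    Tendsto (recessiveSolution w u) atTop (nhds 0) := by
  have htail : Tendsto (fun r => (u a)⁻¹ * ∫ t in Ioi r, (w t)⁻¹) atTop (nhds 0) := by
    simpa only [mul_zero, id] using (tendsto_integral_Ioi_zero tendsto_id).const_mul (u a)⁻¹
  refine squeeze_zero' ?_ ?_ htail
  · filter_upwards [eventually_ge_atTop a] with r hr
    exact (recessiveSolution_pos hw0 hu hint hr).le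
  · filter_upwards [eventually_ge_atTop a] with r hr
    exact recessiveSolution_le hw0 hu hu_mono hint hw_int hr

namespace IsSturmLiouvilleSolution

theorem continuousOn (h : IsSturmLiouvilleSolution w m a u q) : ContinuousOn u (Ici a) :=
  fun r hr => (h.hasDerivWithinAt r hr).continuousWithinAt

theorem continuousOn_flux (h : IsSturmLiouvilleSolution w m a u q) : ContinuousOn q (Ici a) :=
  fun r hr => (h.hasDerivWithinAt_flux r hr).continuousWithinAt

theorem div_const (h : IsSturmLiouvilleSolution w m a u q) (c : ℝ) :
    IsSturmLiouvilleSolution w m a (fun r => u r / c) (fun r => q r / c) where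
  hasDerivWithinAt r hr := ((h.hasDerivWithinAt r hr).div_const c).congr_deriv (div_right_comm ..)
  hasDerivWithinAt_flux r hr :=
    ((h.hasDerivWithinAt_flux r hr).div_const c).congr_deriv (mul_div_assoc ..)

theorem mono_left {r : ℝ} (h : IsSturmLiouvilleSolution w m a u q) (hr : a ≤ r) :
    IsSturmLiouvilleSolution w m r u q where
  hasDerivWithinAt s hs := (h.hasDerivWithinAt s (hr.trans hs)).mono (Ici_subset_Ici.2 hr)
  hasDerivWithinAt_flux s hs := (h.hasDerivWithinAt_flux s (hr.trans hs)).mono (Ici_subset_Ici.2 hr)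

theorem hasDerivWithinAt_deriv {c r : ℝ} (h : IsSturmLiouvilleSolution w m a u q) (hr : a ≤ r)
    (hwr : w r ≠ 0) (hw : HasDerivWithinAt w (c * w r) (Ici a) r) :
    HasDerivWithinAt (fun s => q s / w s) (m r / w r * u r - c * (q r / w r)) (Ici a) r :=
  ((h.hasDerivWithinAt_flux r hr).div hw hwr).congr_deriv (by field_simp)

theorem pos_and_flux_pos (h : IsSturmLiouvilleSolution w m a u q) (hw0 : ∀ r, a ≤ r → 0 < w r)
    (hm0 : ∀ r, a ≤ r → 0 ≤ m r) (hu : 0 < u a) (hq : 0 < q a) {r : ℝ} (hr : a ≤ r) :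
    0 < u r ∧ 0 < q r := by
  have hmono : MonotoneOn (fun s => u s * q s) (Ici a) := by
    refine monotoneOn_Ici_of_hasDerivWithinAt_nonneg
      (fun s hs => (h.hasDerivWithinAt s hs).mul (h.hasDerivWithinAt_flux s hs)) fun s hs => ?_
    have hderiv : q s / w s * q s + u s * (m s * u s) = q s ^ 2 / w s + m s * u s ^ 2 := by ring
    have := hw0 s hs
    have := hm0 s hs
    rw [hderiv]
    positivity
  have huq {s : ℝ} (hs : a ≤ s) : 0 < u s * q s :=
    (mul_pos hu hq).trans_le (hmono self_mem_Ici hs hs)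
  have hur : 0 < u r := by
    by_contra! hneg
    obtain ⟨s, hs, hs0⟩ : (0 : ℝ) ∈ u '' Icc a r :=
      intermediate_value_Icc' hr (h.continuousOn.mono Icc_subset_Ici_self) ⟨hneg, hu.le⟩
    exact (huq hs.1).ne' (by rw [hs0, zero_mul])
  exact ⟨hur, pos_of_mul_pos_right (huq hr) hur.le⟩

theorem monotoneOn (h : IsSturmLiouvilleSolution w m a u q) (hw0 : ∀ r, a ≤ r → 0 < w r)
    (hq : ∀ r, a ≤ r → 0 ≤ q r) : MonotoneOn u (Ici a) :=
  monotoneOn_Ici_of_hasDerivWithinAt_nonneg h.hasDerivWithinAt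
    fun r hr => div_nonneg (hq r hr) (hw0 r hr).le

theorem antitoneOn (h : IsSturmLiouvilleSolution w m a u q) (hw0 : ∀ r, a ≤ r → 0 < w r)
    (hq : ∀ r, a ≤ r → q r ≤ 0) : AntitoneOn u (Ici a) :=
  antitoneOn_Ici_of_hasDerivWithinAt_nonpos h.hasDerivWithinAt
    fun r hr => div_nonpos_of_nonpos_of_nonneg (hq r hr) (hw0 r hr).le

theorem monotoneOn_flux (h : IsSturmLiouvilleSolution w m a u q) (hm0 : ∀ r, a ≤ r → 0 ≤ m r)
    (hu : ∀ r, a ≤ r → 0 ≤ u r) : MonotoneOn q (Ici a) :=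
  monotoneOn_Ici_of_hasDerivWithinAt_nonneg h.hasDerivWithinAt_flux
    fun r hr => mul_nonneg (hm0 r hr) (hu r hr)

theorem continuousOn_inv_mul_sq (h : IsSturmLiouvilleSolution w m a u q)
    (hw : ContinuousOn w (Ici a)) (hw0 : ∀ r, a ≤ r → 0 < w r) (hu : ∀ r, a ≤ r → 0 < u r) :
    ContinuousOn (fun r => (w r * u r ^ 2)⁻¹) (Ici a) :=
  (hw.mul (h.continuousOn.pow 2)).inv₀ fun r hr =>
    (mul_pos (hw0 r hr) (pow_pos (hu r hr) 2)).ne'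

theorem integrableOn_and_mul_integral_le (h : IsSturmLiouvilleSolution w m a u q)
    (hw : ContinuousOn w (Ici a)) (hw0 : ∀ r, a ≤ r → 0 < w r) (hm0 : ∀ r, a ≤ r → 0 ≤ m r)
    (hu : ∀ r, a ≤ r → 0 < u r) (hq : 0 < q a) :
    IntegrableOn (fun r => (w r * u r ^ 2)⁻¹) (Ioi a) ∧
      q a * ∫ r in Ioi a, (w r * u r ^ 2)⁻¹ ≤ (u a)⁻¹ := by
  have hq_mono : MonotoneOn q (Ici a) := h.monotoneOn_flux hm0 fun r hr => (hu r hr).le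
  have hpos (r : ℝ) (hr : a ≤ r) : 0 ≤ (w r * u r ^ 2)⁻¹ := by
    have := hw0 r hr
    positivity
  obtain ⟨hint, hle⟩ := integrableOn_Ioi_of_le_neg_deriv (φ := fun r => q a * (w r * u r ^ 2)⁻¹)
    (fun r hr => (h.hasDerivWithinAt r hr).inv (hu r hr).ne') (fun r hr => (inv_pos.2 (hu r hr)).le)
    (continuousOn_const.mul (h.continuousOn_inv_mul_sq hw hw0 hu))
    (fun r hr => mul_nonneg hq.le (hpos r hr)) fun r hr => by
      calc q a * (w r * u r ^ 2)⁻¹ ≤ q r * (w r * u r ^ 2)⁻¹ :=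
            mul_le_mul_of_nonneg_right (hq_mono self_mem_Ici hr hr) (hpos r hr)
        _ = -(-(q r / w r) / u r ^ 2) := by ring
  exact ⟨(integrable_const_mul_iff hq.ne'.isUnit _).1 hint, by rwa [← integral_const_mul]⟩

theorem recessive (h : IsSturmLiouvilleSolution w m a u q) (hw : ContinuousOn w (Ici a))
    (hw0 : ∀ r, a ≤ r → 0 < w r) (hu : ∀ r, a ≤ r → 0 < u r)
    (hint : IntegrableOn (fun r => (w r * u r ^ 2)⁻¹) (Ioi a)) :
    IsSturmLiouvilleSolution w m a (recessiveSolution w u)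
      fun r => q r * (∫ t in Ioi r, (w t * u t ^ 2)⁻¹) - (u r)⁻¹ where
  hasDerivWithinAt r hr := by
    have hwr := hw0 r hr
    have hur := hu r hr
    exact ((h.hasDerivWithinAt r hr).mul (hasDerivWithinAt_integral_Ioi
      (h.continuousOn_inv_mul_sq hw hw0 hu) hint hr)).congr_deriv (by field_simp; ring)
  hasDerivWithinAt_flux r hr := by
    have hwr := hw0 r hr
    have hur := hu r hr
    refine (((h.hasDerivWithinAt_flux r hr).mul (hasDerivWithinAt_integral_Ioi
      (h.continuousOn_inv_mul_sq hw hw0 hu) hint hr)).sub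
        ((h.hasDerivWithinAt r hr).inv hur.ne')).congr_deriv ?_
    rw [recessiveSolution]
    field_simp
    ring

theorem flux_mul_integral_le_inv (h : IsSturmLiouvilleSolution w m a u q)
    (hw : ContinuousOn w (Ici a)) (hw0 : ∀ r, a ≤ r → 0 < w r) (hm0 : ∀ r, a ≤ r → 0 ≤ m r)
    (hu : ∀ r, a ≤ r → 0 < u r) (hq : ∀ r, a ≤ r → 0 < q r) {r : ℝ} (hr : a ≤ r) :
    q r * ∫ t in Ioi r, (w t * u t ^ 2)⁻¹ ≤ (u r)⁻¹ :=
  ((h.mono_left hr).integrableOn_and_mul_integral_le (hw.mono (Ici_subset_Ici.2 hr))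
    (fun s hs => hw0 s (hr.trans hs)) (fun s hs => hm0 s (hr.trans hs))
    (fun s hs => hu s (hr.trans hs)) (hq r hr)).2

theorem integrableOn_and_integral_le_neg_flux (h : IsSturmLiouvilleSolution w m a u q)
    (hm : ContinuousOn m (Ici a)) (hm0 : ∀ r, a ≤ r → 0 ≤ m r) (hq : ∀ r, a ≤ r → q r ≤ 0)
    {l : ℝ} (hl : 0 < l) (hu : ∀ r, a ≤ r → l ≤ u r) :
    IntegrableOn m (Ioi a) ∧ l * ∫ r in Ioi a, m r ≤ -q a := by
  obtain ⟨hint, hle⟩ := integrableOn_Ioi_of_le_neg_deriv (φ := fun r => l * m r)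
    (fun r hr => (h.hasDerivWithinAt_flux r hr).neg) (fun r hr => neg_nonneg.2 (hq r hr))
    (continuousOn_const.mul hm) (fun r hr => mul_nonneg hl.le (hm0 r hr)) fun r hr => by
      rw [neg_neg, mul_comm]
      exact mul_le_mul_of_nonneg_left (hu r hr) (hm0 r hr)
  exact ⟨(integrable_const_mul_iff hl.ne'.isUnit _).1 hint, by rwa [← integral_const_mul]⟩

theorem integrableOn_integral_Ioi_div (h : IsSturmLiouvilleSolution w m a u q)
    (hw : ContinuousOn w (Ici a)) (hw0 : ∀ r, a ≤ r → 0 < w r) (hm : ContinuousOn m (Ici a))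
    (hm0 : ∀ r, a ≤ r → 0 ≤ m r) (hq : ∀ r, a ≤ r → q r ≤ 0)
    {l : ℝ} (hl : 0 < l) (hu : ∀ r, a ≤ r → l ≤ u r) :
    IntegrableOn (fun r => (∫ t in Ioi r, m t) / w r) (Ioi a) := by
  have hm_int : IntegrableOn m (Ioi a) :=
    (h.integrableOn_and_integral_le_neg_flux hm hm0 hq hl hu).1
  have htail_cont : ContinuousOn (fun r => ∫ t in Ioi r, m t) (Ici a) := fun r hr =>
    (hasDerivWithinAt_integral_Ioi hm hm_int hr).continuousWithinAt
  have htail_nonneg (r : ℝ) (hr : a ≤ r) : 0 ≤ ∫ t in Ioi r, m t :=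
    setIntegral_nonneg measurableSet_Ioi fun t ht => hm0 t (hr.trans ht.out.le)
  have htail_le (r : ℝ) (hr : a ≤ r) : l * ∫ t in Ioi r, m t ≤ -q r :=
    ((h.mono_left hr).integrableOn_and_integral_le_neg_flux (hm.mono (Ici_subset_Ici.2 hr))
      (fun s hs => hm0 s (hr.trans hs)) (fun s hs => hq s (hr.trans hs)) hl
      fun s hs => hu s (hr.trans hs)).2
  refine (integrable_const_mul_iff hl.ne'.isUnit _).1
    (integrableOn_Ioi_of_le_neg_deriv h.hasDerivWithinAt (fun r hr => hl.le.trans (hu r hr))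
      (continuousOn_const.mul (htail_cont.div hw fun r hr => (hw0 r hr).ne'))
      (fun r hr => mul_nonneg hl.le (div_nonneg (htail_nonneg r hr) (hw0 r hr).le))
      fun r hr => ?_).1
  rw [← mul_div_assoc, ← neg_div]
  exact div_le_div_of_nonneg_right (htail_le r hr) (hw0 r hr).le

theorem tendsto_zero (h : IsSturmLiouvilleSolution w m a u q)
    (hw : ContinuousOn w (Ici a)) (hw0 : ∀ r, a ≤ r → 0 < w r) (hm : ContinuousOn m (Ici a))
    (hm0 : ∀ r, a ≤ r → 0 ≤ m r) (hu : ∀ r, a ≤ r → 0 ≤ u r) (hq : ∀ r, a ≤ r → q r ≤ 0)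
    (hdiv : ¬ IntegrableOn m (Ici a) ∨
      ¬ IntegrableOn (fun r => (∫ t in Ioi r, m t) / w r) (Ici a)) :
    Tendsto u atTop (nhds 0) := by
  obtain ⟨l, hlim, hl, hlu⟩ := exists_tendsto_atTop_of_antitoneOn_Ici (h.antitoneOn hw0 hq) hu
  rcases hl.eq_or_lt with rfl | hl
  · exact hlim
  rw [integrableOn_Ici_iff_integrableOn_Ioi, integrableOn_Ici_iff_integrableOn_Ioi] at hdiv
  rcases hdiv with hdiv | hdiv
  · exact absurd (h.integrableOn_and_integral_le_neg_flux hm hm0 hq hl hlu).1 hdiv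
  · exact absurd (h.integrableOn_integral_Ioi_div hw hw0 hm hm0 hq hl hlu) hdiv

end IsSturmLiouvilleSolution

theorem exists_antitone_isSturmLiouvilleSolution (hw : ContinuousOn w (Ici a))
    (hw0 : ∀ r, a ≤ r → 0 < w r) (hm : ContinuousOn m (Ici a)) (hm0 : ∀ r, a ≤ r → 0 ≤ m r) :
    ∃ u q, IsSturmLiouvilleSolution w m a u q ∧ u a = 1 ∧ (∀ r, a ≤ r → 0 < u r ∧ q r ≤ 0) ∧
      (IntegrableOn (fun r => (w r)⁻¹) (Ici a) → Tendsto u atTop (nhds 0)) := by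
  obtain ⟨v, p, h, hva, hpa⟩ :=
    exists_isSturmLiouvilleSolution hw (fun r hr => (hw0 r hr).ne') hm 1 1
  have hpos (r : ℝ) (hr : a ≤ r) : 0 < v r ∧ 0 < p r :=
    h.pos_and_flux_pos hw0 hm0 (hva ▸ one_pos) (hpa ▸ one_pos) hr
  have hv (r : ℝ) (hr : a ≤ r) : 0 < v r := (hpos r hr).1
  have hp (r : ℝ) (hr : a ≤ r) : 0 < p r := (hpos r hr).2
  have hint := (h.integrableOn_and_mul_integral_le hw hw0 hm0 hv (hp a le_rfl)).1
  have hrec (r : ℝ) (hr : a ≤ r) : 0 < recessiveSolution w v r :=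
    recessiveSolution_pos hw0 hv hint hr
  refine ⟨_, _, (h.recessive hw hw0 hv hint).div_const (recessiveSolution w v a),
    div_self (hrec a le_rfl).ne', fun r hr => ⟨div_pos (hrec r hr) (hrec a le_rfl), ?_⟩,
    fun hw_int => ?_⟩
  · exact div_nonpos_of_nonpos_of_nonneg
      (sub_nonpos.2 (h.flux_mul_integral_le_inv hw hw0 hm0 hv hp hr)) (hrec a le_rfl).le
  · rw [integrableOn_Ici_iff_integrableOn_Ioi] at hw_int
    simpa only [zero_div] using (tendsto_recessiveSolution_zero hw0 hv
      (h.monotoneOn hw0 fun r hr => (hp r hr).le) hint hw_int).div_const _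

theorem IsFellerAtTop.exists_tendsto_zero (hfeller : IsFellerAtTop w m a)
    (hw : ContinuousOn w (Ici a)) (hw0 : ∀ r, a ≤ r → 0 < w r) (hm : ContinuousOn m (Ici a))
    (hm0 : ∀ r, a ≤ r → 0 ≤ m r) :
    ∃ u q, IsSturmLiouvilleSolution w m a u q ∧ u a = 1 ∧ (∀ r, a ≤ r → 0 < u r ∧ q r ≤ 0) ∧
      Tendsto u atTop (nhds 0) := by
  obtain ⟨u, q, h, hua, huq, hlim⟩ := exists_antitone_isSturmLiouvilleSolution hw hw0 hm hm0
  exact ⟨u, q, h, hua, huq, hfeller.elim hlim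
    (h.tendsto_zero hw hw0 hm hm0 (fun r hr => (huq r hr).1.le) fun r hr => (huq r hr).2)⟩

theorem isFellerAtTop_const_mul_right {c : ℝ} (hc : c ≠ 0) :
    IsFellerAtTop w (fun r => c * m r) a ↔ IsFellerAtTop w m a := by
  have htail : (fun r => (∫ t in Ioi r, c * m t) / w r) =
      fun r => c * ((∫ t in Ioi r, m t) / w r) := by
    funext r
    rw [integral_const_mul, mul_div_assoc]
  simp only [IsFellerAtTop, htail, IntegrableOn, integrable_const_mul_iff hc.isUnit]

end SturmLiouville

/-! ## The radial eigenvalue equation -/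

theorem hasDerivWithinAt_rpow_of_pos {g : ℝ → ℝ} {g' p r : ℝ} {s : Set ℝ}
    (hg : HasDerivWithinAt g g' s r) (hr : 0 < g r) :
    HasDerivWithinAt (fun t => g t ^ p) (p * (g' / g r) * g r ^ p) s r :=
  (hg.rpow_const (Or.inl hr.ne')).congr_deriv (by rw [rpow_sub_one hr.ne']; ring)

theorem IsFellerAtTop.exists_solution_tendsto_zero {w c k : ℝ → ℝ} {a : ℝ}
    (hfeller : IsFellerAtTop w (fun r => k r * w r) a)
    (hw : ∀ r, a ≤ r → HasDerivWithinAt w (c r * w r) (Ici a) r) (hw0 : ∀ r, a ≤ r → 0 < w r)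
    (hc : ContinuousOn c (Ici a)) (hk : ContinuousOn k (Ici a)) (hk0 : ∀ r, a ≤ r → 0 ≤ k r) :
    ∃ β β' β'' : ℝ → ℝ,
      (∀ r, a ≤ r → HasDerivWithinAt β (β' r) (Ici a) r) ∧
      (∀ r, a ≤ r → HasDerivWithinAt β' (β'' r) (Ici a) r) ∧
      ContinuousOn β'' (Ici a) ∧
      (∀ r, a ≤ r → β'' r + c r * β' r = k r * β r) ∧
      β a = 1 ∧
      (∀ r, a ≤ r → 0 < β r ∧ β r ≤ 1 ∧ β' r ≤ 0) ∧
      Tendsto β atTop (nhds 0) := by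
  have hw_cont : ContinuousOn w (Ici a) := fun r hr => (hw r hr).continuousWithinAt
  obtain ⟨β, q, h, hβ_one, hβq, hβ_lim⟩ := hfeller.exists_tendsto_zero hw_cont hw0
    (hk.mul hw_cont) fun r hr => mul_nonneg (hk0 r hr) (hw0 r hr).le
  have hβ_anti : AntitoneOn β (Ici a) := h.antitoneOn hw0 fun r hr => (hβq r hr).2
  have hβ'_cont : ContinuousOn (fun r => q r / w r) (Ici a) :=
    h.continuousOn_flux.div hw_cont fun r hr => (hw0 r hr).ne'
  refine ⟨β, fun r => q r / w r, fun r => k r * β r - c r * (q r / w r), h.hasDerivWithinAt,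
    fun r hr => ?_, (hk.mul h.continuousOn).sub (hc.mul hβ'_cont),
    fun r _ => sub_add_cancel _ _, hβ_one, fun r hr => ⟨(hβq r hr).1, ?_, ?_⟩, hβ_lim⟩
  · have hwr := (hw0 r hr).ne'
    exact (h.hasDerivWithinAt_deriv hr hwr (hw r hr)).congr_deriv
      (by rw [mul_div_cancel_right₀ _ hwr])
  · exact hβ_one ▸ hβ_anti self_mem_Ici hr hr
  · exact div_nonpos_of_nonpos_of_nonneg (hβq r hr).2 (hw0 r hr).le

theorem stmt10_general
    (n R₀ lam : ℝ) (hlam : 0 < lam)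
    (g g' : ℝ → ℝ)
    (hg_deriv : ∀ r : ℝ, R₀ ≤ r → HasDerivWithinAt g (g' r) (Ici R₀) r)
    (hg'_cont : ContinuousOn g' (Ici R₀))
    (hg_pos : ∀ r : ℝ, R₀ ≤ r → 0 < g r)
    (hcond : IntegrableOn (fun r : ℝ => g r ^ (1 - n)) (Ici R₀) ∨
      ¬ IntegrableOn (fun r : ℝ => g r ^ (n - 1)) (Ici R₀) ∨
      ¬ IntegrableOn (fun r : ℝ => (∫ t in Ioi r, g t ^ (n - 1)) / g r ^ (n - 1)) (Ici R₀)) :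
    ∃ β β' β'' : ℝ → ℝ,
      (∀ r : ℝ, R₀ ≤ r → HasDerivWithinAt β (β' r) (Ici R₀) r) ∧
      (∀ r : ℝ, R₀ ≤ r → HasDerivWithinAt β' (β'' r) (Ici R₀) r) ∧
      ContinuousOn β'' (Ici R₀) ∧
      (∀ r : ℝ, R₀ ≤ r → β'' r + (n - 1) * (g' r / g r) * β' r = lam * β r) ∧
      β R₀ = 1 ∧
      (∀ r : ℝ, R₀ ≤ r → 0 < β r ∧ β r ≤ 1 ∧ β' r ≤ 0) ∧
      Tendsto β atTop (nhds 0) := by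
  have hg_cont : ContinuousOn g (Ici R₀) := fun r hr => (hg_deriv r hr).continuousWithinAt
  have hinv : EqOn (fun r => g r ^ (1 - n)) (fun r => (g r ^ (n - 1))⁻¹) (Ici R₀) := fun r hr => by
    beta_reduce
    rw [← rpow_neg (hg_pos r hr).le, neg_sub]
  have hfeller : IsFellerAtTop (fun r => g r ^ (n - 1)) (fun r => lam * g r ^ (n - 1)) R₀ :=
    (isFellerAtTop_const_mul_right hlam.ne').2
      (hcond.imp_left (integrableOn_congr_fun hinv measurableSet_Ici).1)
  exact hfeller.exists_solution_tendsto_zero (k := fun _ => lam)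
    (fun r hr => hasDerivWithinAt_rpow_of_pos (hg_deriv r hr) (hg_pos r hr))
    (fun r hr => rpow_pos_of_pos (hg_pos r hr) _)
    (continuousOn_const.mul (hg'_cont.div hg_cont fun r hr => (hg_pos r hr).ne'))
    continuousOn_const fun _ _ => hlam.le

/-- existence of the minimal decaying solution of the radial
eigenvalue ODE `β'' + (n-1)(g'/g) β' = λ β` on `[R₀,∞)` under the Feller-type
integral conditions on `g`. -/
theorem stmt10
    (n : ℝ) (hn : 1 < n)
    (R₀ : ℝ) (hR₀ : 0 ≤ R₀)
    (lam : ℝ) (hlam : 0 < lam)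
    (g g' : ℝ → ℝ)
    (hg_deriv : ∀ r : ℝ, R₀ ≤ r → HasDerivWithinAt g (g' r) (Set.Ici R₀) r)
    (hg'_cont : ContinuousOn g' (Set.Ici R₀))
    (hg_pos : ∀ r : ℝ, R₀ ≤ r → 0 < g r)
    (hcond :
      MeasureTheory.IntegrableOn (fun r : ℝ => g r ^ (1 - n)) (Set.Ici R₀) ∨
      (¬ MeasureTheory.IntegrableOn (fun r : ℝ => g r ^ (1 - n)) (Set.Ici R₀) ∧
        (¬ MeasureTheory.IntegrableOn (fun r : ℝ => g r ^ (n - 1)) (Set.Ici R₀) ∨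
          ¬ MeasureTheory.IntegrableOn
              (fun r : ℝ => (∫ t in Set.Ioi r, g t ^ (n - 1)) / g r ^ (n - 1))
              (Set.Ici R₀)))) :
    ∃ β β' β'' : ℝ → ℝ,
      (∀ r : ℝ, R₀ ≤ r → HasDerivWithinAt β (β' r) (Set.Ici R₀) r) ∧
      (∀ r : ℝ, R₀ ≤ r → HasDerivWithinAt β' (β'' r) (Set.Ici R₀) r) ∧
      ContinuousOn β'' (Set.Ici R₀) ∧
      (∀ r : ℝ, R₀ ≤ r → β'' r + (n - 1) * (g' r / g r) * β' r = lam * β r) ∧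
      β R₀ = 1 ∧
      (∀ r : ℝ, R₀ ≤ r → 0 < β r ∧ β r ≤ 1 ∧ β' r ≤ 0) ∧
      Filter.Tendsto β Filter.atTop (nhds 0) :=
  stmt10_general n R₀ lam hlam g g' hg_deriv hg'_cont hg_pos (hcond.imp_right And.right)
end
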